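/- Define g_{1,6}(τ) = g_{(3/6,0)}(6τ)³ · g_{(1/6,0)}(6τ)⁻³ for τ ∈ ℍ. Then the ring O_{1,6}(ℚ) of weakly holomorphic modular functions for Γ₁(6) with rational Fourier coefficients equals ℚ[g_{1,6}, g_{1,6}⁻¹, (g_{1,6} − 8)⁻¹, (g_{1,6} + 1)⁻¹]; that is, these four functions lie in O_{1,6}(ℚ), and every element of O_{1,6}(ℚ) is a polynomial in them with rational coefficients. -/

import Mathlib

open Complex UpperHalfPlane Matrix MatrixGroups CongruenceSubgroup
open scoped UpperHalfPlane Manifold Real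

noncomputable section

/-- `N·τ` as a point of the upper half-plane (junk value `τ` if `N = 0`). -/
def hsmul (N : ℕ) (τ : UpperHalfPlane) : UpperHalfPlane :=
  if hN : 0 < N then
    ⟨(N : ℂ) * τ, by
      have h0 : (0 : ℝ) < (N : ℝ) := by exact_mod_cast hN
      simpa [Complex.mul_im] using mul_pos h0 τ.2⟩
  else τ

/-- The Siegel function `g_r(τ)` given by its infinite product expansion. -/
def siegel (r : ℚ × ℚ) (τ : ℍ) : ℂ :=
  -Complex.exp ((Real.pi : ℂ) * Complex.I * (((r.1 : ℂ) ^ 2 - (r.1 : ℂ) + 1 / 6) * τ)) *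
    Complex.exp ((Real.pi : ℂ) * Complex.I * (r.2 : ℂ) * ((r.1 : ℂ) - 1)) *
    (1 - Complex.exp (2 * (Real.pi : ℂ) * Complex.I * ((r.1 : ℂ) * τ + (r.2 : ℂ)))) *
    ∏' n : ℕ,
      ((1 - Complex.exp (2 * (Real.pi : ℂ) * Complex.I *
          (((n : ℂ) + 1 + (r.1 : ℂ)) * τ + (r.2 : ℂ)))) *
       (1 - Complex.exp (2 * (Real.pi : ℂ) * Complex.I *
          (((n : ℂ) + 1 - (r.1 : ℂ)) * τ - (r.2 : ℂ)))))

/-- The lattice point `ω = m·τ + n` attached to a pair `(m,n) ∈ ℤ²`. -/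
def lat (τ : ℍ) (p : ℤ × ℤ) : ℂ := (p.1 : ℂ) * τ + (p.2 : ℂ)

/-- `g₂(τ) = 60 ∑_{ω ∈ L_τ ∖ {0}} ω⁻⁴`. -/
def g2C (τ : ℍ) : ℂ := 60 * ∑' p : {p : ℤ × ℤ // p ≠ 0}, ((lat τ p.1) ^ 4)⁻¹

/-- `g₃(τ) = 140 ∑_{ω ∈ L_τ ∖ {0}} ω⁻⁶`. -/
def g3C (τ : ℍ) : ℂ := 140 * ∑' p : {p : ℤ × ℤ // p ≠ 0}, ((lat τ p.1) ^ 6)⁻¹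

/-- The discriminant `Δ(τ) = g₂(τ)³ - 27 g₃(τ)²`. -/
def discC (τ : ℍ) : ℂ := g2C τ ^ 3 - 27 * g3C τ ^ 2

/-- The Weierstrass `℘`-function relative to the lattice `L_τ = ℤτ + ℤ`. -/
def wpC (z : ℂ) (τ : ℍ) : ℂ :=
  (z ^ 2)⁻¹ + ∑' p : {p : ℤ × ℤ // p ≠ 0}, (((z - lat τ p.1) ^ 2)⁻¹ - ((lat τ p.1) ^ 2)⁻¹)

/-- The Fricke function `f_r(τ)`. -/
def fricke (r : ℚ × ℚ) (τ : ℍ) : ℂ :=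
  -(2 ^ 7 * 3 ^ 5) * (g2C τ * g3C τ / discC τ) * wpC ((r.1 : ℂ) * τ + (r.2 : ℂ)) τ

/-- The elliptic modular `j`-invariant. -/
def jinv (τ : ℍ) : ℂ := 1728 * g2C τ ^ 3 / discC τ

/-- The Dedekind eta function. -/
def etaC (τ : ℍ) : ℂ :=
  (Real.sqrt (2 * Real.pi) : ℂ) * Complex.exp (2 * (Real.pi : ℂ) * Complex.I / 16) *
    Complex.exp (2 * (Real.pi : ℂ) * Complex.I * τ / 24) *
    ∏' n : ℕ, (1 - Complex.exp (2 * (Real.pi : ℂ) * Complex.I * ((n : ℂ) + 1) * τ))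

/-- `r ∈ ℚ² ∖ ℤ²`. -/
def NonIntegral (r : ℚ × ℚ) : Prop := ¬ ∃ a b : ℤ, r = ((a : ℚ), (b : ℚ))

/-- `r ∈ (1/N)ℤ²`. -/
def InDen (N : ℕ) (r : ℚ × ℚ) : Prop := ∃ a b : ℤ, r = ((a : ℚ) / N, (b : ℚ) / N)

/-- Membership in `Γ^1(N)`: `a ≡ d ≡ 1` and `b ≡ 0 (mod N)`. -/
def GammaUpper (N : ℕ) (γ : SL(2, ℤ)) : Prop :=
  ((γ 0 0 : ℤ) : ZMod N) = 1 ∧ ((γ 1 1 : ℤ) : ZMod N) = 1 ∧ ((γ 0 1 : ℤ) : ZMod N) = 0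

/-- The transpose action `ᵗγ r = (a r₁ + c r₂, b r₁ + d r₂)` of `γ = [[a,b],[c,d]]`. -/
def tAct (γ : SL(2, ℤ)) (r : ℚ × ℚ) : ℚ × ℚ :=
  ((γ 0 0 : ℚ) * r.1 + (γ 1 0 : ℚ) * r.2, (γ 0 1 : ℚ) * r.1 + (γ 1 1 : ℚ) * r.2)

/-- The power `q^{n/d} = e^{2πi(n/d)τ}`. -/
def qpow (d : ℕ) (n : ℤ) (τ : ℍ) : ℂ :=
  Complex.exp (2 * (Real.pi : ℂ) * Complex.I * ((n : ℂ) / (d : ℂ)) * τ)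

/-- `h` is a weakly holomorphic modular function for `Γ₁(N)` with rational
Fourier coefficients: holomorphic on `ℍ`, `Γ₁(N)`-invariant, with a convergent
`q`-expansion at `i∞` having rational coefficients, and meromorphic at every cusp. -/
def IsWeaklyHolo1 (N : ℕ) (h : ℍ → ℂ) : Prop :=
  MDifferentiable 𝓘(ℂ) 𝓘(ℂ) h ∧
  (∀ γ ∈ Gamma1 N, ∀ τ : ℍ, h (γ • τ) = h τ) ∧
  (∃ n₀ : ℤ, ∃ c : ℕ → ℚ,
    ∀ τ : ℍ, HasSum (fun n : ℕ => (c n : ℂ) * qpow 1 (n₀ + n) τ) (h τ)) ∧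
  (∀ γ : SL(2, ℤ), ∃ n₀ : ℤ, ∃ c : ℕ → ℂ,
    ∀ τ : ℍ, HasSum (fun n : ℕ => c n * qpow N (n₀ + n) τ) (h (γ • τ)))

/-- `h` is a weakly holomorphic modular function for `Γ^1(N)` with rational
Fourier coefficients (the expansion at `i∞` being in powers of `q^{1/N}`). -/
def IsWeaklyHoloUp (N : ℕ) (h : ℍ → ℂ) : Prop :=
  MDifferentiable 𝓘(ℂ) 𝓘(ℂ) h ∧
  (∀ γ : SL(2, ℤ), GammaUpper N γ → ∀ τ : ℍ, h (γ • τ) = h τ) ∧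
  (∃ n₀ : ℤ, ∃ c : ℕ → ℚ,
    ∀ τ : ℍ, HasSum (fun n : ℕ => (c n : ℂ) * qpow N (n₀ + n) τ) (h τ)) ∧
  (∀ γ : SL(2, ℤ), ∃ n₀ : ℤ, ∃ c : ℕ → ℂ,
    ∀ τ : ℍ, HasSum (fun n : ℕ => c n * qpow N (n₀ + n) τ) (h (γ • τ)))

/-- The Weierstrass-unit generator
`f^1_{m,N} = (f_{(1/N,0)} - f_{(1/m,0)})/(f_{(2/m,0)} - f_{(1/m,0)})`. -/
def fUnit (m N : ℕ) (τ : ℍ) : ℂ :=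
  (fricke ((1 : ℚ) / N, 0) τ - fricke ((1 : ℚ) / m, 0) τ) /
    (fricke ((2 : ℚ) / m, 0) τ - fricke ((1 : ℚ) / m, 0) τ)

/-- `g_{1,6}(τ) = g_{(3/6,0)}(6τ)³ · g_{(1/6,0)}(6τ)⁻³`. -/
def gOne6 (τ : ℍ) : ℂ :=
  siegel ((3 : ℚ) / 6, 0) (hsmul 6 τ) ^ 3 * (siegel ((1 : ℚ) / 6, 0) (hsmul 6 τ) ^ 3)⁻¹

/-! ### Jacobi triple product -/

/-- finite q-Pochhammer `(q;q)_n`. -/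
def qp (q : ℂ) (n : ℕ) : ℂ := ∏ k ∈ Finset.range n, (1 - q ^ (k + 1))

lemma qp_succ (q : ℂ) (n : ℕ) : qp q (n + 1) = qp q n * (1 - q ^ (n + 1)) := by
  simp [qp, Finset.prod_range_succ]

lemma one_sub_pow_ne {q : ℂ} (hq : ‖q‖ < 1) (k : ℕ) : 1 - q ^ (k + 1) ≠ 0 := by
  intro h
  have h1 : ‖q ^ (k + 1)‖ = 1 := by rw [← sub_eq_zero.mp h]; simp
  rw [norm_pow] at h1
  have := pow_lt_one₀ (norm_nonneg q) hq (Nat.succ_ne_zero k)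
  exact absurd h1 this.ne

lemma qp_ne {q : ℂ} (hq : ‖q‖ < 1) (n : ℕ) : qp q n ≠ 0 :=
  Finset.prod_ne_zero_iff.mpr fun k _ => one_sub_pow_ne hq k

/-- Gaussian binomial coefficient -/
def qb (q : ℂ) (M m : ℕ) : ℂ := if m ≤ M then qp q M / (qp q m * qp q (M - m)) else 0

lemma qb_pascal {q : ℂ} (hq : ‖q‖ < 1) (M m : ℕ) (hm : m ≤ M) :
    qb q (M + 1) (m + 1) = qb q M (m + 1) + q ^ (M - m) * qb q M m := by
  have h1 := qp_ne hq
  rcases Nat.lt_or_ge m M with h | h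
  · obtain ⟨d, rfl⟩ := Nat.exists_eq_add_of_lt h
    have e1 : m + d + 1 + 1 - (m + 1) = d + 1 := by omega
    have e2 : m + d + 1 - (m + 1) = d := by omega
    have e3 : m + d + 1 - m = d + 1 := by omega
    simp only [qb, e1, e2, e3, if_pos (show m + 1 ≤ m + d + 1 + 1 by omega),
      if_pos (show m + 1 ≤ m + d + 1 by omega), if_pos (show m ≤ m + d + 1 by omega)]
    rw [qp_succ q (m + d + 1), qp_succ q d, qp_succ q m]
    have := h1 m
    have := h1 d
    have := h1 (m + d + 1)
    have := one_sub_pow_ne hq m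
    have := one_sub_pow_ne hq d
    field_simp
    ring
  · obtain rfl : m = M := le_antisymm hm h
    have h0 : qp q 0 = 1 := by simp [qp]
    simp [qb, h0, div_self (h1 _)]

lemma q_binomial {q : ℂ} (hq : ‖q‖ < 1) (x : ℂ) (M : ℕ) :
    ∏ k ∈ Finset.range M, (1 - x * q ^ k) =
      ∑ m ∈ Finset.range (M + 1), (-1) ^ m * q ^ (m.choose 2) * qb q M m * x ^ m := by
  have hb0 : ∀ M, qb q M 0 = 1 := fun M => by
    have h0 : qp q 0 = 1 := by simp [qp]
    simp [qb, h0, div_self (qp_ne hq M)]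
  induction M with
  | zero => simp [hb0]
  | succ M ih =>
    rw [Finset.prod_range_succ, ih, Finset.sum_range_succ' _ (M + 1)]
    have hlast : qb q M (M + 1) = 0 := by simp [qb]
    have key : ∀ m ∈ Finset.range (M + 1),
        (-1) ^ (m + 1) * q ^ ((m + 1).choose 2) * qb q (M + 1) (m + 1) * x ^ (m + 1) =
        (-1) ^ (m + 1) * q ^ ((m + 1).choose 2) * qb q M (m + 1) * x ^ (m + 1)
        - x * q ^ M * ((-1) ^ m * q ^ (m.choose 2) * qb q M m * x ^ m) := by
      intro m hm
      have hm' : m ≤ M := by simpa [Nat.lt_succ_iff] using hm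
      rw [qb_pascal hq M m hm']
      have e : (m + 1).choose 2 = m + m.choose 2 := by
        rw [Nat.choose_succ_succ' m 1]; simp
      have e2 : q ^ M = q ^ (M - m) * q ^ m := by rw [← pow_add]; congr 1; omega
      rw [e, e2]
      ring
    rw [Finset.sum_congr rfl key, Finset.sum_sub_distrib, ← Finset.mul_sum]
    rw [Finset.sum_range_succ (fun m => (-1) ^ (m + 1) * q ^ ((m + 1).choose 2) * qb q M (m + 1) * x ^ (m + 1)) M, hlast]
    rw [Finset.sum_range_succ' (fun m => (-1) ^ m * q ^ (m.choose 2) * qb q M m * x ^ m) M]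
    simp [hb0]
    ring

open Filter Topology in
lemma qp_tendsto {q : ℂ} (hq : ‖q‖ < 1) :
    ∃ Q : ℂ, Q ≠ 0 ∧ Tendsto (qp q) atTop (𝓝 Q) := by
  refine ⟨∏' n : ℕ, (1 - q ^ (n + 1)), ?_, ?_⟩
  · have h := tprod_one_add_ne_zero_of_summable (f := fun n : ℕ => -q ^ (n + 1))
      (fun i => by simpa [sub_eq_add_neg] using one_sub_pow_ne hq i)
      (by simpa using (summable_nat_add_iff 1).mpr
            (summable_geometric_of_lt_one (norm_nonneg _) hq))
    simpa [sub_eq_add_neg] using h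
  · exact (ModularForm.multipliable_one_sub_pow hq).hasProd.tendsto_prod_nat

/-- extended coefficient -/
def qc (q : ℂ) (N : ℕ) (j : ℤ) : ℂ := if -(N : ℤ) ≤ j then qb q (2 * N) (N + j).toNat else 0

open Filter Topology in
lemma qc_tendsto {q Q : ℂ} (hQ : Q ≠ 0) (h : Tendsto (qp q) atTop (𝓝 Q)) (j : ℤ) :
    Tendsto (fun N => qc q N j) atTop (𝓝 Q⁻¹) := by
  have h1 : Tendsto (fun N : ℕ => qp q (2 * N) / (qp q (N + j).toNat * qp q (N - j).toNat))
      atTop (𝓝 (Q / (Q * Q))) := by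
    refine Tendsto.div (h.comp ?_) ((h.comp ?_).mul (h.comp ?_)) (mul_ne_zero hQ hQ)
    · exact tendsto_atTop_mono (fun n => by simp; omega) tendsto_id
    · refine tendsto_atTop_atTop.mpr fun b => ⟨b + j.natAbs, fun a ha => by omega⟩
    · refine tendsto_atTop_atTop.mpr fun b => ⟨b + j.natAbs, fun a ha => by omega⟩
  rw [show Q / (Q * Q) = Q⁻¹ by field_simp] at h1
  refine h1.congr' ?_
  filter_upwards [eventually_ge_atTop j.natAbs] with N hN
  have e1 : -(N : ℤ) ≤ j := by omega
  have e2 : (N + j).toNat ≤ 2 * N := by omega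
  have e3 : 2 * N - (N + j).toNat = (N - j).toNat := by omega
  simp [qc, qb, e1, e2, e3]

open Filter Topology in
lemma qc_bound {q Q : ℂ} (hQ : Q ≠ 0) (h : Tendsto (qp q) atTop (𝓝 Q)) :
    ∃ B : ℝ, ∀ N j, ‖qc q N j‖ ≤ B := by
  obtain ⟨A, hA⟩ := (Metric.isBounded_range_of_tendsto _ h).exists_norm_le
  obtain ⟨A', hA'⟩ := (Metric.isBounded_range_of_tendsto _ (h.inv₀ hQ)).exists_norm_le
  have hA1 : ∀ n, ‖qp q n‖ ≤ A := fun n => hA _ ⟨n, rfl⟩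
  have hA2 : ∀ n, ‖(qp q n)⁻¹‖ ≤ A' := fun n => hA' _ ⟨n, rfl⟩
  have hA0 : 0 ≤ A := (norm_nonneg _).trans (hA1 0)
  have hA0' : 0 ≤ A' := (norm_nonneg _).trans (hA2 0)
  refine ⟨A * (A' * A'), fun N j => ?_⟩
  have hp : 0 ≤ A * (A' * A') := by positivity
  unfold qc qb
  split_ifs
  · rw [div_eq_mul_inv, mul_inv, norm_mul, norm_mul]
    gcongr
    exacts [hA1 _, hA2 _, hA2 _]
  · simpa using hp
  · simpa using hp

lemma prod_pow_succ (p : ℂ) (N : ℕ) :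
    ∏ k ∈ Finset.range N, (p ^ 2) ^ (k + 1) = p ^ (N * (N + 1)) := by
  induction N with
  | zero => simp
  | succ N ih => rw [Finset.prod_range_succ, ih, ← pow_mul, ← pow_add]; congr 1; ring

lemma finite_triple {p x : ℂ} (hp : ‖p‖ < 1) (hp0 : p ≠ 0) (hx : x ≠ 0) (N : ℕ) :
    ∏ k ∈ Finset.range N, ((1 - x * (p ^ 2) ^ k) * (1 - (p ^ 2) ^ (k + 1) / x)) =
      ∑' j : ℤ, (-1) ^ j * p ^ (j * (j - 1)) * x ^ j * qc (p ^ 2) N j := by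
  have hq : ‖p ^ 2‖ < 1 := by rw [norm_pow]; exact pow_lt_one₀ (norm_nonneg _) hp two_ne_zero
  have hsum : ∑' j : ℤ, (-1) ^ j * p ^ (j * (j - 1)) * x ^ j * qc (p ^ 2) N j =
      ∑ m ∈ Finset.range (2 * N + 1), (-1) ^ ((m : ℤ) - N) * p ^ (((m : ℤ) - N) * ((m : ℤ) - N - 1))
        * x ^ ((m : ℤ) - N) * qb (p ^ 2) (2 * N) m := by
    have hinj : Function.Injective (fun m : ℕ => (m : ℤ) - N) := fun a b h => by
      simpa using h
    rw [tsum_eq_sum (s := (Finset.range (2 * N + 1)).map ⟨_, hinj⟩), Finset.sum_map]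
    · refine Finset.sum_congr rfl fun m hm => ?_
      simp [qc]
    · intro j hj
      have : qc (p ^ 2) N j = 0 := by
        unfold qc qb
        split_ifs with h1 h2
        · exfalso
          apply hj
          simp only [Finset.mem_map, Finset.mem_range, Function.Embedding.coeFn_mk]
          exact ⟨(N + j).toNat, by omega, by omega⟩
        · rfl
        · rfl
      simp [this]
  have hb := q_binomial hq (x * p ^ (-(2 * N : ℤ))) (2 * N)
  have hprod : ∏ k ∈ Finset.range (2 * N), (1 - x * p ^ (-(2 * N : ℤ)) * (p ^ 2) ^ k) =
      ((-x) ^ N * p ^ (-(N * (N + 1) : ℤ))) *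
      ∏ k ∈ Finset.range N, ((1 - x * (p ^ 2) ^ k) * (1 - (p ^ 2) ^ (k + 1) / x)) := by
    rw [two_mul, Finset.prod_range_add, Finset.prod_mul_distrib,
      ← Finset.prod_range_reflect _ N]
    have a1 : ∏ k ∈ Finset.range N, (1 - x * p ^ (-((N : ℤ) + N)) * (p ^ 2) ^ (N + k)) =
        ∏ k ∈ Finset.range N, (1 - x * (p ^ 2) ^ k) := by
      refine Finset.prod_congr rfl fun k _ => ?_
      rw [mul_assoc, ← zpow_natCast, ← zpow_natCast, ← zpow_natCast, ← _root_.zpow_mul, ← zpow_add₀ hp0,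
        ← _root_.zpow_mul]
      congr 3; push_cast; ring
    have a2 : ∏ k ∈ Finset.range N, (1 - x * p ^ (-((N : ℤ) + N)) * (p ^ 2) ^ (N - 1 - k)) =
        ∏ k ∈ Finset.range N, ((-x) * ((p ^ 2) ^ (k + 1))⁻¹ * (1 - (p ^ 2) ^ (k + 1) / x)) := by
      refine Finset.prod_congr rfl fun k hk => ?_
      have hk' : k < N := by simpa using hk
      have : p ^ (-((N : ℤ) + N)) * (p ^ 2) ^ (N - 1 - k) = ((p ^ 2) ^ (k + 1))⁻¹ := by
        rw [← zpow_natCast, ← zpow_natCast, ← zpow_natCast, ← _root_.zpow_mul, ← zpow_add₀ hp0,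
          ← _root_.zpow_mul, ← _root_.zpow_neg]
        congr 1
        have : ((N - 1 - k : ℕ) : ℤ) = N - 1 - k := by omega
        rw [this]; push_cast; ring
      rw [mul_assoc, this]
      field_simp
      ring
    have a3 : (p ^ (-((N : ℤ) * (N + 1)))) = (∏ k ∈ Finset.range N, (p ^ 2) ^ (k + 1))⁻¹ := by
      rw [prod_pow_succ, _root_.zpow_neg, ← zpow_natCast]; push_cast; rfl
    rw [show (2 * (N:ℤ)) = N + N by ring] at *
    simp only [a1, a2, a3]
    rw [Finset.prod_mul_distrib, Finset.prod_mul_distrib, Finset.prod_const, Finset.card_range,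
      Finset.prod_inv_distrib]
    ring
  have hne : ((-x) ^ N * p ^ (-(N * (N + 1) : ℤ))) ≠ 0 :=
    mul_ne_zero (pow_ne_zero _ (neg_ne_zero.mpr hx)) (zpow_ne_zero _ hp0)
  rw [hsum]
  apply mul_left_cancel₀ hne
  rw [← hprod, hb, Finset.mul_sum]
  refine Finset.sum_congr rfl fun m _ => ?_
  have c1 : ((-1 : ℂ)) ^ m * (p ^ 2) ^ (m.choose 2) = (-1) ^ (m : ℤ) * p ^ ((m : ℤ) * (m - 1)) := by
    rw [← pow_mul, ← zpow_natCast, ← zpow_natCast]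
    congr 2
    have := Nat.triangle_succ
    have h2 := Nat.choose_two_right m
    have h3 : 2 * (m.choose 2) = m * (m - 1) := by
      rw [h2]; exact Nat.mul_div_cancel' (Nat.even_mul_pred_self m).two_dvd
    rcases m with _ | m
    · simp
    · rw [h3]; push_cast; simp
  rw [c1, neg_pow x, mul_pow, ← zpow_natCast (-1 : ℂ) N, ← zpow_natCast x N, ← zpow_natCast x m,
    ← zpow_natCast (p ^ _) m, ← _root_.zpow_mul]
  have e1 : ((-1 : ℂ)) ^ (m : ℤ) = (-1) ^ (N : ℤ) * (-1) ^ ((m : ℤ) - N) := by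
    rw [← zpow_add₀ (by norm_num)]; congr 1; ring
  have e2 : x ^ (m : ℤ) = x ^ (N : ℤ) * x ^ ((m : ℤ) - N) := by
    rw [← zpow_add₀ hx]; congr 1; ring
  have e3 : p ^ ((m : ℤ) * (m - 1)) * p ^ (-(2 * (N : ℤ)) * (m : ℤ)) =
      p ^ (-((N : ℤ) * (N + 1))) * p ^ (((m : ℤ) - N) * ((m : ℤ) - N - 1)) := by
    rw [← zpow_add₀ hp0, ← zpow_add₀ hp0]; congr 1; ring
  rw [e1, e2]
  linear_combination ((-1) ^ (N : ℤ) * (-1) ^ ((m : ℤ) - N) * (x ^ (N : ℤ) * x ^ ((m : ℤ) - N)) * qb (p ^ 2) (2 * N) m) * e3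

/-- shifted theta function -/
def th (z τ : ℂ) : ℂ := jacobiTheta₂ (z + 1 / 2 - τ / 2) τ

lemma th_term (z τ : ℂ) (j : ℤ) :
    jacobiTheta₂_term j (z + 1 / 2 - τ / 2) τ =
      (-1) ^ j * (cexp (π * Complex.I * τ)) ^ (j * (j - 1)) * (cexp (2 * π * Complex.I * z)) ^ j := by
  unfold jacobiTheta₂_term
  rw [← Complex.exp_pi_mul_I, ← Complex.exp_int_mul, ← Complex.exp_int_mul, ← Complex.exp_int_mul,
    ← Complex.exp_add, ← Complex.exp_add]
  congr 1
  push_cast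
  ring

lemma summable_th {τ : ℂ} (hτ : 0 < τ.im) (z : ℂ) :
    Summable fun j : ℤ =>
      (-1) ^ j * (cexp (π * Complex.I * τ)) ^ (j * (j - 1)) * (cexp (2 * π * Complex.I * z)) ^ j := by
  have := (summable_jacobiTheta₂_term_iff (z + 1 / 2 - τ / 2) τ).mpr hτ
  refine this.congr fun j => (th_term z τ j)

lemma norm_p_lt {τ : ℂ} (hτ : 0 < τ.im) : ‖cexp (π * Complex.I * τ)‖ < 1 := by
  rw [Complex.norm_exp]
  rw [Real.exp_lt_one_iff]
  simp
  positivity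

open Filter Topology in
lemma triple_tendsto {τ : ℂ} (hτ : 0 < τ.im) : ∃ Q : ℂ, Q ≠ 0 ∧ ∀ z : ℂ,
    Tendsto (fun N => ∏ k ∈ Finset.range N, ((1 - cexp (2 * π * Complex.I * z) * (cexp (π * Complex.I * τ) ^ 2) ^ k) *
      (1 - (cexp (π * Complex.I * τ) ^ 2) ^ (k + 1) / cexp (2 * π * Complex.I * z)))) atTop (𝓝 (th z τ * Q⁻¹)) := by
  have hp := norm_p_lt hτ
  have hp0 : cexp (π * Complex.I * τ) ≠ 0 := Complex.exp_ne_zero _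
  have hq : ‖cexp (π * Complex.I * τ) ^ 2‖ < 1 := by
    rw [norm_pow]; exact pow_lt_one₀ (norm_nonneg _) hp two_ne_zero
  obtain ⟨Q, hQ, hlim⟩ := qp_tendsto hq
  obtain ⟨B, hB⟩ := qc_bound hQ hlim
  refine ⟨Q, hQ, fun z => ?_⟩
  have hx : cexp (2 * π * Complex.I * z) ≠ 0 := Complex.exp_ne_zero _
  simp only [finite_triple hp hp0 hx]
  rw [th, jacobiTheta₂, ← tsum_mul_right]
  simp only [th_term]
  refine tendsto_tsum_of_dominated_convergence
    (bound := fun j => ‖(-1) ^ j * (cexp (π * Complex.I * τ)) ^ (j * (j - 1)) * (cexp (2 * π * Complex.I * z)) ^ j‖ * B)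
    ((summable_th hτ z).norm.mul_right B) ?_ ?_
  · intro j
    exact (qc_tendsto hQ hlim j).const_mul _
  · refine Eventually.of_forall fun N j => ?_
    rw [norm_mul]
    gcongr
    exact hB N j

/-- the product in the Siegel function -/
def sprod (z τ : ℂ) : ℂ := (1 - cexp (2 * π * Complex.I * z)) *
  ∏' n : ℕ, ((1 - cexp (2 * π * Complex.I * ((n + 1) * τ + z))) * (1 - cexp (2 * π * Complex.I * ((n + 1) * τ - z))))

lemma summable_qx {τ : ℂ} (hτ : 0 < τ.im) (z : ℂ) :
    Summable fun n : ℕ => ‖cexp (2 * π * Complex.I * (n * τ + z))‖ := by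
  have hp := norm_p_lt hτ
  have hq : ‖cexp (π * Complex.I * τ) ^ 2‖ < 1 := by
    rw [norm_pow]; exact pow_lt_one₀ (norm_nonneg _) hp two_ne_zero
  have := (summable_geometric_of_lt_one (norm_nonneg _) hq).mul_right ‖cexp (2 * π * Complex.I * z)‖
  refine this.congr fun n => ?_
  rw [← norm_pow, ← norm_mul, ← Complex.exp_nat_mul, ← Complex.exp_nat_mul, ← Complex.exp_add]
  congr 2; push_cast; ring

lemma mult_qx {τ : ℂ} (hτ : 0 < τ.im) (z : ℂ) :
    Multipliable fun n : ℕ => 1 - cexp (2 * π * Complex.I * (n * τ + z)) := by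
  have := multipliable_one_add_of_summable (f := fun n : ℕ => -cexp (2 * π * Complex.I * (n * τ + z)))
    (by simpa using summable_qx hτ z)
  simpa [sub_eq_add_neg] using this

lemma mult_qx1 {τ : ℂ} (hτ : 0 < τ.im) (z : ℂ) :
    Multipliable fun n : ℕ => 1 - cexp (2 * π * Complex.I * ((n + 1) * τ + z)) := by
  have := mult_qx hτ (τ + z)
  refine this.congr fun n => ?_
  congr 3; ring

lemma triple_product {τ : ℂ} (hτ : 0 < τ.im) : ∃ Q : ℂ, Q ≠ 0 ∧ ∀ z : ℂ,
    th z τ = Q * sprod z τ := by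
  obtain ⟨Q, hQ, h⟩ := triple_tendsto hτ
  refine ⟨Q, hQ, fun z => ?_⟩
  have m1 := mult_qx hτ z
  have m2 := mult_qx1 hτ z
  have m3 : Multipliable fun n : ℕ => 1 - cexp (2 * π * Complex.I * ((n + 1) * τ - z)) := by
    simpa [sub_eq_add_neg] using mult_qx1 hτ (-z)
  have t1 := (m1.mul m3).hasProd.tendsto_prod_nat
  have e : ∀ k : ℕ, (1 - cexp (2 * π * Complex.I * z) * (cexp (π * Complex.I * τ) ^ 2) ^ k) *
      (1 - (cexp (π * Complex.I * τ) ^ 2) ^ (k + 1) / cexp (2 * π * Complex.I * z)) =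
      (1 - cexp (2 * π * Complex.I * (k * τ + z))) * (1 - cexp (2 * π * Complex.I * ((k + 1) * τ - z))) := by
    intro k
    congr 2
    · rw [← Complex.exp_nat_mul, ← Complex.exp_nat_mul, ← Complex.exp_add]
      congr 1; push_cast; ring
    · rw [← Complex.exp_nat_mul, ← Complex.exp_nat_mul, ← Complex.exp_sub]
      congr 1; push_cast; ring
  have t2 := h z
  simp only [e] at t2
  have key := tendsto_nhds_unique t2 t1
  rw [m1.tprod_mul m3, tprod_eq_zero_mul' (f := fun n : ℕ => 1 - cexp (2 * π * Complex.I * (n * τ + z))) (by simpa using m2)] at key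
  rw [sprod, m2.tprod_mul m3]
  have key2 : th z τ = Q * (th z τ * Q⁻¹) := by field_simp
  rw [key2, key]
  simp [mul_assoc]

lemma sprod_ne {τ : ℂ} (hτ : 0 < τ.im) {z : ℂ} (hz : ∀ n : ℤ, cexp (2 * π * Complex.I * (n * τ + z)) ≠ 1) :
    sprod z τ ≠ 0 := by
  have m2 := mult_qx1 hτ z
  have m3 : Multipliable fun n : ℕ => 1 - cexp (2 * π * Complex.I * ((n + 1) * τ - z)) := by
    simpa [sub_eq_add_neg] using mult_qx1 hτ (-z)
  rw [sprod, m2.tprod_mul m3]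
  refine mul_ne_zero ?_ (mul_ne_zero ?_ ?_)
  · have := hz 0
    simp at this
    exact sub_ne_zero.mpr (Ne.symm (by simpa using this))
  · have := tprod_one_add_ne_zero_of_summable (f := fun n : ℕ => -cexp (2 * π * Complex.I * ((n + 1) * τ + z)))
      (fun n => by
        have := hz (n + 1)
        push_cast at this
        rw [← sub_eq_add_neg]; exact sub_ne_zero.mpr (Ne.symm this)) (by
        have := summable_qx hτ (τ + z)
        refine this.congr fun n => ?_
        rw [norm_neg]; congr 3; ring)
    simpa [sub_eq_add_neg] using this
  · have := tprod_one_add_ne_zero_of_summable (f := fun n : ℕ => -cexp (2 * π * Complex.I * ((n + 1) * τ - z)))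
      (fun n => by
        have := hz (-(n + 1))
        push_cast at this
        rw [← sub_eq_add_neg]; refine sub_ne_zero.mpr (Ne.symm ?_)
        intro h
        apply this
        rw [show 2 * π * Complex.I * (-((n : ℂ) + 1) * τ + z) = -(2 * π * Complex.I * ((n + 1) * τ - z)) by ring,
          Complex.exp_neg, h, inv_one]) (by
        have := summable_qx hτ (τ - z)
        refine this.congr fun n => ?_
        rw [norm_neg]; congr 3; ring)
    simpa [sub_eq_add_neg] using this

/-- Klein-like form -/
def KK (u v τ : ℂ) : ℂ :=
  cexp (π * Complex.I * ((u ^ 2 - u) * τ + v * (u - 1))) * th (u * τ + v) τ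

lemma KK_add_left (u v τ : ℂ) : KK (u + 1) v τ = -cexp (-(π * Complex.I * v)) * KK u v τ := by
  unfold KK th
  rw [show (u + 1) * τ + v + 1 / 2 - τ / 2 = (u * τ + v + 1 / 2 - τ / 2) + τ by ring,
    jacobiTheta₂_add_left', ← mul_assoc, ← mul_assoc, ← Complex.exp_add,
    show -cexp (-(π * Complex.I * v)) = cexp (π * Complex.I) * cexp (-(π * Complex.I * v)) by
      rw [Complex.exp_pi_mul_I]; ring, ← Complex.exp_add, ← Complex.exp_add]
  congr 1
  rw [Complex.exp_eq_exp_iff_exists_int]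
  refine ⟨-1, ?_⟩
  push_cast; ring

lemma KK_add_right (u v τ : ℂ) : KK u (v + 1) τ = -cexp (π * Complex.I * u) * KK u v τ := by
  unfold KK th
  rw [show u * τ + (v + 1) + 1 / 2 - τ / 2 = (u * τ + v + 1 / 2 - τ / 2) + 1 by ring,
    jacobiTheta₂_add_left, ← mul_assoc,
    show -cexp (π * Complex.I * u) = cexp (π * Complex.I) * cexp (π * Complex.I * u) by
      rw [Complex.exp_pi_mul_I]; ring, ← Complex.exp_add, ← Complex.exp_add]
  congr 1
  rw [Complex.exp_eq_exp_iff_exists_int]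
  refine ⟨-1, ?_⟩
  push_cast; ring

lemma theta_add_one (z τ : ℂ) : jacobiTheta₂ z (τ + 1) = jacobiTheta₂ (z + 1 / 2) τ := by
  refine tsum_congr fun n => ?_
  unfold jacobiTheta₂_term
  rw [Complex.exp_eq_exp_iff_exists_int]
  obtain ⟨k, hk⟩ : Even (n ^ 2 - n) := by
    have := Int.even_mul_pred_self n
    rwa [show n ^ 2 - n = n * (n - 1) by ring]
  refine ⟨k, ?_⟩
  have : (n : ℂ) ^ 2 - n = k + k := by exact_mod_cast hk
  linear_combination (π * Complex.I) * this

lemma KK_T (u v τ : ℂ) : KK u v (τ + 1) = KK u (u + v) τ := by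
  unfold KK th
  rw [theta_add_one]
  congr 2 <;> ring

lemma KK_S {τ : ℂ} (hτ : 0 < τ.im) : ∃ D : ℂ, D ≠ 0 ∧ ∀ u v : ℂ,
    KK u v (-1 / τ) = D * KK v (-u) τ := by
  have h0 : τ ≠ 0 := by rintro rfl; simp at hτ
  have h1 : (-Complex.I * τ) ^ (1 / 2 : ℂ) ≠ 0 := by
    rw [Ne, Complex.cpow_eq_zero_iff]; simp [h0]
  refine ⟨(-Complex.I * τ) ^ (1 / 2 : ℂ) * cexp (π * Complex.I * (τ / 4 + 1 / (4 * τ) - 1 / 2)),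
    mul_ne_zero h1 (Complex.exp_ne_zero _), fun u v => ?_⟩
  unfold KK th
  have hf := jacobiTheta₂_functional_equation ((v * τ + -u + 1 / 2 - τ / 2) + τ) τ
  rw [jacobiTheta₂_add_left'] at hf
  rw [show u * (-1 / τ) + v + 1 / 2 - -1 / τ / 2 = (v * τ + -u + 1 / 2 - τ / 2 + τ) / τ by
    field_simp; ring]
  have hf2 : jacobiTheta₂ ((v * τ + -u + 1 / 2 - τ / 2 + τ) / τ) (-1 / τ) =
     (-Complex.I * τ) ^ (1 / 2 : ℂ) * (cexp (π * Complex.I * (v * τ + -u + 1 / 2 - τ / 2 + τ) ^ 2 / τ) *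
      (cexp (-π * Complex.I * (τ + 2 * (v * τ + -u + 1 / 2 - τ / 2)))) *
        jacobiTheta₂ (v * τ + -u + 1 / 2 - τ / 2) τ) := by
    rw [mul_assoc, hf,
      show π * Complex.I * (v * τ + -u + 1 / 2 - τ / 2 + τ) ^ 2 / τ =
        -(-π * Complex.I * (v * τ + -u + 1 / 2 - τ / 2 + τ) ^ 2 / τ) by ring, Complex.exp_neg]
    have := Complex.exp_ne_zero (-π * Complex.I * (v * τ + -u + 1 / 2 - τ / 2 + τ) ^ 2 / τ)
    field_simp
  rw [hf2, ← Complex.exp_add]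
  have e : cexp (π * Complex.I * ((u ^ 2 - u) * (-1 / τ) + v * (u - 1))) *
      cexp (π * Complex.I * (v * τ + -u + 1 / 2 - τ / 2 + τ) ^ 2 / τ +
        (-π * Complex.I * (τ + 2 * (v * τ + -u + 1 / 2 - τ / 2)))) =
      cexp (π * Complex.I * (τ / 4 + 1 / (4 * τ) - 1 / 2)) *
      cexp (π * Complex.I * ((v ^ 2 - v) * τ + -u * (v - 1))) := by
    rw [← Complex.exp_add, ← Complex.exp_add]
    congr 1
    field_simp
    ring
  linear_combination ((-Complex.I * τ) ^ (1 / 2 : ℂ) * jacobiTheta₂ (v * τ + -u + 1 / 2 - τ / 2) τ) * e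

/-- transformation property -/
def KTr (γ : SL(2, ℤ)) : Prop := ∀ τ : ℍ, ∃ D : ℂ, D ≠ 0 ∧ ∀ u v : ℂ,
  KK u v ((γ • τ : ℍ) : ℂ) =
    D * KK (u * (γ 0 0 : ℤ) + v * (γ 1 0 : ℤ)) (u * (γ 0 1 : ℤ) + v * (γ 1 1 : ℤ)) τ

lemma KTr_all (γ : SL(2, ℤ)) : KTr γ := by
  have hmem : γ ∈ Subgroup.closure {ModularGroup.S, ModularGroup.T} := by
    rw [SpecialLinearGroup.SL2Z_generators]; trivial
  induction hmem using Subgroup.closure_induction with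
  | mem x hx =>
    rcases hx with rfl | rfl
    · intro τ
      obtain ⟨D, hD, h⟩ := KK_S τ.2
      refine ⟨D, hD, fun u v => ?_⟩
      rw [UpperHalfPlane.modular_S_smul]
      rw [show ((UpperHalfPlane.mk (-τ : ℂ)⁻¹ τ.im_inv_neg_coe_pos : ℍ) : ℂ) = -1 / τ by
        change (-(τ : ℂ))⁻¹ = -1 / τ
        rw [inv_neg, neg_div, one_div], h]
      simp [ModularGroup.S]
    · intro τ
      refine ⟨1, one_ne_zero, fun u v => ?_⟩
      rw [UpperHalfPlane.modular_T_smul,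
        show ((((1 : ℝ) +ᵥ τ : ℍ)) : ℂ) = τ + 1 by simp [add_comm], KK_T]
      simp [ModularGroup.T]
  | one => exact fun τ => ⟨1, one_ne_zero, fun u v => by simp⟩
  | mul x y _ _ hx hy =>
    intro τ
    obtain ⟨D, hD, h⟩ := hx (y • τ)
    obtain ⟨E, hE, h'⟩ := hy τ
    refine ⟨D * E, mul_ne_zero hD hE, fun u v => ?_⟩
    rw [mul_smul, h, h', mul_assoc]
    congr 2
    simp [Matrix.mul_apply, Fin.sum_univ_two]; ring_nf
  | inv x _ hx =>
    intro τ
    obtain ⟨D, hD, h⟩ := hx (x⁻¹ • τ)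
    refine ⟨D⁻¹, inv_ne_zero hD, fun u v => ?_⟩
    have h2 := h (u * (x⁻¹ 0 0 : ℤ) + v * (x⁻¹ 1 0 : ℤ)) (u * (x⁻¹ 0 1 : ℤ) + v * (x⁻¹ 1 1 : ℤ))
    rw [smul_inv_smul] at h2
    rw [h2, inv_mul_cancel_left₀ hD]
    have hdet := Matrix.det_fin_two x.1
    rw [x.2] at hdet
    have hdet' : ((x 0 0 : ℤ) : ℂ) * (x 1 1 : ℤ) - (x 0 1 : ℤ) * (x 1 0 : ℤ) = 1 := by
      exact_mod_cast hdet.symm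
    congr 1
    · simp [Matrix.adjugate_fin_two]
      linear_combination (-u) * hdet'
    · simp [Matrix.adjugate_fin_two]
      linear_combination (-v) * hdet'

lemma siegel_eq_KK (τ : ℍ) : ∃ C : ℂ, C ≠ 0 ∧ ∀ r : ℚ × ℚ, siegel r τ = C * KK r.1 r.2 τ := by
  obtain ⟨Q, hQ, h⟩ := triple_product τ.2
  refine ⟨-cexp (π * Complex.I * (τ / 6)) * Q⁻¹,
    mul_ne_zero (neg_ne_zero.mpr (Complex.exp_ne_zero _)) (inv_ne_zero hQ), fun r => ?_⟩
  have hs : siegel r τ = - cexp ((Real.pi : ℂ) * Complex.I * (((r.1 : ℂ) ^ 2 - (r.1 : ℂ) + 1 / 6) * τ)) *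
    cexp ((Real.pi : ℂ) * Complex.I * (r.2 : ℂ) * ((r.1 : ℂ) - 1)) * sprod (r.1 * τ + r.2) τ := by
    unfold siegel sprod
    rw [mul_assoc _ (1 - _) _]
    congr 4
    funext n
    congr 4 <;> ring
  unfold KK
  rw [hs, h, neg_mul, ← Complex.exp_add]
  have : cexp ((Real.pi : ℂ) * Complex.I * (((r.1 : ℂ) ^ 2 - (r.1 : ℂ) + 1 / 6) * τ) +
      (Real.pi : ℂ) * Complex.I * (r.2 : ℂ) * ((r.1 : ℂ) - 1)) = cexp (π * Complex.I * (τ / 6)) *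
      cexp (π * Complex.I * (((r.1 : ℂ) ^ 2 - r.1) * τ + r.2 * (r.1 - 1))) := by
    rw [← Complex.exp_add]; congr 1; ring
  rw [this]
  field_simp

lemma KK_ne (τ : ℍ) (u v : ℝ) (h : ¬ ((∃ n : ℤ, u = n) ∧ ∃ n : ℤ, v = n)) : KK u v τ ≠ 0 := by
  obtain ⟨Q, hQ, ht⟩ := triple_product τ.2
  unfold KK
  rw [ht]
  refine mul_ne_zero (Complex.exp_ne_zero _) (mul_ne_zero hQ (sprod_ne τ.2 fun n hn => h ?_))
  rw [Complex.exp_eq_one_iff] at hn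
  obtain ⟨m, hm⟩ := hn
  have hpi : (2 * π * Complex.I : ℂ) ≠ 0 := by simp [Real.pi_ne_zero, Complex.I_ne_zero]
  have h2 : (n * (τ : ℂ) + (u * τ + v)) = m := by
    apply mul_left_cancel₀ hpi; rw [hm]; ring
  have him := congrArg Complex.im h2
  have hre := congrArg Complex.re h2
  simp at him hre
  have hu : (n + u) * τ.im = 0 := by linarith
  have hu' : (n : ℝ) + u = 0 := by
    rcases mul_eq_zero.mp hu with h | h
    · exact h
    · exact absurd h τ.2.ne'
  refine ⟨⟨-n, by push_cast; linarith⟩, ⟨m, ?_⟩⟩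
  have : u = -n := by linarith
  rw [this] at hre
  linarith

/-- neighbourhood filter of `i∞` in `ℂ` -/
def LL : Filter ℂ := Filter.comap Complex.im Filter.atTop

/-- leading coefficient of `th` -/
def ell (u v : ℝ) : ℂ := if u = 0 then 1 - cexp (2 * π * Complex.I * v) else 1

lemma norm_th_term (u v : ℝ) (τ : ℂ) (j : ℤ) :
    ‖(-1) ^ j * (cexp (π * Complex.I * τ)) ^ (j * (j - 1)) * (cexp (2 * π * Complex.I * (u * τ + v))) ^ j‖
      = Real.exp (-π * (j * (j - 1 + 2 * u)) * τ.im) := by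
  rw [← th_term, norm_jacobiTheta₂_term]
  congr 1
  simp
  ring

lemma expo_pos {u : ℝ} (h0 : 0 ≤ u) (h1 : u < 1) (j : ℤ) (hj : j ≠ 0) (hj1 : j = 1 → u ≠ 0) :
    0 < (j : ℝ) * (j - 1 + 2 * u) := by
  rcases lt_trichotomy j 1 with h | h | h
  · have : (j : ℝ) ≤ -1 := by exact_mod_cast (show j ≤ -1 by omega)
    nlinarith
  · subst h
    have : 0 < u := lt_of_le_of_ne h0 (Ne.symm (hj1 rfl))
    simp; linarith
  · have : (2 : ℝ) ≤ j := by exact_mod_cast (show 2 ≤ j by omega)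
    nlinarith

open Filter Topology in
lemma th_tendsto {u : ℝ} (v : ℝ) (h0 : 0 ≤ u) (h1 : u < 1) :
    Tendsto (fun τ : ℂ => th (u * τ + v) τ) LL (𝓝 (ell u v)) := by
  have hl : ell u v = ∑' j : ℤ, (if j = 0 then 1 else if j = 1 ∧ u = 0 then
      -cexp (2 * π * Complex.I * v) else 0) := by
    rw [tsum_eq_sum (s := {0, 1})]
    · by_cases hu : u = 0 <;> simp [ell, hu, sub_eq_add_neg]
    · intro j hj
      simp at hj
      simp [hj.1, hj.2]
  rw [hl]
  simp only [th, jacobiTheta₂, th_term]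
  have hI : 0 < (Complex.I).im := by simp
  refine tendsto_tsum_of_dominated_convergence (summable_th hI (u * Complex.I + v)).norm ?_ ?_
  · intro j
    by_cases hj : j = 0
    · simpa [hj] using tendsto_const_nhds
    by_cases hj1 : j = 1 ∧ u = 0
    · simpa [hj1] using tendsto_const_nhds
    rw [if_neg hj, if_neg hj1]
    rw [tendsto_zero_iff_norm_tendsto_zero]
    simp only [norm_th_term]
    have hp := expo_pos h0 h1 j hj (fun h h' => hj1 ⟨h, h'⟩)
    have : Tendsto (fun τ : ℂ => π * (j * (j - 1 + 2 * u)) * τ.im) LL atTop :=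
      Tendsto.const_mul_atTop (by positivity) tendsto_comap
    refine (Real.tendsto_exp_neg_atTop_nhds_zero.comp this).congr fun τ => ?_
    simp
  · have : ∀ᶠ τ : ℂ in LL, 1 ≤ τ.im := tendsto_comap.eventually (eventually_ge_atTop 1)
    filter_upwards [this] with τ hτ j
    rw [norm_th_term, norm_th_term]
    simp only [Complex.I_im, mul_one, Real.exp_le_exp]
    have hp : 0 ≤ (j : ℝ) * (j - 1 + 2 * u) := by
      by_cases hj : j = 0
      · simp [hj]
      by_cases hj1 : j = 1 ∧ u = 0
      · simp [hj1]
      exact (expo_pos h0 h1 j hj (fun h h' => hj1 ⟨h, h'⟩)).le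
    have hpi := Real.pi_pos
    have : 0 ≤ π * ((j : ℝ) * (j - 1 + 2 * u)) := by positivity
    nlinarith

lemma norm_KK_add_int (u v : ℝ) (τ : ℂ) (n : ℤ) : ‖KK (u + n) v τ‖ = ‖KK u v τ‖ := by
  have h1 : ∀ w : ℂ, ‖KK (w + 1) v τ‖ = ‖KK w v τ‖ := fun w => by
    rw [KK_add_left, norm_mul, norm_neg,
      show -(π * Complex.I * v : ℂ) = ((-(π * v) : ℝ) : ℂ) * Complex.I by push_cast; ring,
      Complex.norm_exp_ofReal_mul_I, one_mul]
  induction n using Int.induction_on with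
  | zero => simp
  | succ n ih => rw [← ih, ← h1 (u + (n : ℤ))]; congr 2; push_cast; ring
  | pred n ih => rw [← ih, ← h1]; congr 2; push_cast; ring

/-- order function -/
def BB (u : ℝ) : ℝ := (Int.fract u) ^ 2 - Int.fract u

lemma ell_ne {u v : ℝ} (h : ¬ ((∃ n : ℤ, u = n) ∧ ∃ n : ℤ, v = n)) : ell (Int.fract u) v ≠ 0 := by
  unfold ell
  split_ifs with hu
  · intro hv
    apply h
    refine ⟨⟨⌊u⌋, by rw [Int.fract] at hu; linarith⟩, ?_⟩
    have := (sub_eq_zero.mp hv).symm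
    rw [Complex.exp_eq_one_iff] at this
    obtain ⟨m, hm⟩ := this
    have hpi : (2 * π * Complex.I : ℂ) ≠ 0 := by simp [Real.pi_ne_zero, Complex.I_ne_zero]
    have h2 : (v : ℂ) = m := by apply mul_left_cancel₀ hpi; rw [hm]; ring
    exact ⟨m, by exact_mod_cast h2⟩
  · exact one_ne_zero

open Filter Topology in
lemma norm_KK_tendsto (u v : ℝ) :
    Tendsto (fun τ : ℂ => ‖KK u v τ‖ * Real.exp (π * BB u * τ.im)) LL
      (𝓝 ‖ell (Int.fract u) v‖) := by
  refine ((th_tendsto v (Int.fract_nonneg u) (Int.fract_lt_one u)).norm).congr fun τ => ?_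
  have : ‖KK u v τ‖ = ‖KK (Int.fract u : ℝ) v τ‖ := by
    rw [← norm_KK_add_int (Int.fract u) v τ ⌊u⌋]
    congr 2
    exact_mod_cast (Int.fract_add_floor u).symm
  rw [this, KK, norm_mul, Complex.norm_exp]
  rw [mul_comm (Real.exp _), mul_assoc, ← Real.exp_add]
  have : ((π * Complex.I * (((Int.fract u : ℝ) ^ 2 - (Int.fract u : ℝ)) * τ + v * ((Int.fract u : ℝ) - 1)) : ℂ)).re
      + π * BB u * τ.im = 0 := by
    rw [BB]
    rw [show (π * Complex.I * (((Int.fract u : ℝ) ^ 2 - (Int.fract u : ℝ)) * τ + v * ((Int.fract u : ℝ) - 1)) : ℂ)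
      = ((π * ((Int.fract u) ^ 2 - Int.fract u) : ℝ) * τ + (π * (v * (Int.fract u - 1)) : ℝ)) * Complex.I by
        push_cast; ring]
    rw [Complex.mul_I_re, Complex.add_im, Complex.im_ofReal_mul, Complex.ofReal_im]
    ring
  rw [this]
  simp

open Filter Topology in
lemma KK0_tendsto (v : ℝ) :
    Tendsto (fun τ : ℂ => KK 0 v τ) LL
      (𝓝 (cexp (-(π * Complex.I * v)) * (1 - cexp (2 * π * Complex.I * v)))) := by
  have := (th_tendsto v le_rfl zero_lt_one).const_mul (cexp (-(π * Complex.I * v)))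
  simp only [ell, if_true] at this
  refine this.congr fun τ => ?_
  unfold KK
  rw [show π * Complex.I * ((0 ^ 2 - 0) * τ + v * (0 - 1)) = -(π * Complex.I * v) by ring]
  simp

open Filter Topology in
lemma ratio_lim (u v u' v' : ℝ) (h' : ¬ ((∃ n : ℤ, u' = n) ∧ ∃ n : ℤ, v' = n)) :
    Tendsto (fun τ : ℂ => ‖KK u v τ / KK u' v' τ‖ * Real.exp (π * (BB u - BB u') * τ.im)) LL
      (𝓝 (‖ell (Int.fract u) v‖ / ‖ell (Int.fract u') v'‖)) := by
  refine ((norm_KK_tendsto u v).div (norm_KK_tendsto u' v')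
    (norm_ne_zero_iff.mpr (ell_ne h'))).congr fun τ => ?_
  rw [norm_div, show π * (BB u - BB u') * τ.im = π * BB u * τ.im - π * BB u' * τ.im by ring,
    Real.exp_sub]
  simp only [Pi.div_apply]
  rw [div_mul_div_comm]

open Filter Topology in
lemma ratio_bdd (u v u' v' : ℝ) (h' : ¬ ((∃ n : ℤ, u' = n) ∧ ∃ n : ℤ, v' = n))
    (hB : BB u' ≤ BB u) :
    ∃ C : ℝ, ∀ᶠ τ : ℂ in LL, ‖KK u v τ / KK u' v' τ‖ ≤ C := by
  have h := ratio_lim u v u' v' h'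
  have h1 := h.eventually (eventually_le_nhds (lt_add_one _))
  refine ⟨‖ell (Int.fract u) v‖ / ‖ell (Int.fract u') v'‖ + 1, ?_⟩
  · have : ∀ᶠ τ : ℂ in LL, 1 ≤ τ.im := tendsto_comap.eventually (eventually_ge_atTop 1)
    filter_upwards [h1, this] with τ h1 h2
    refine le_trans ?_ h1
    refine le_mul_of_one_le_right (norm_nonneg _) (Real.one_le_exp ?_)
    have := Real.pi_pos
    have : 0 ≤ BB u - BB u' := by linarith
    positivity

open Filter Topology in
lemma ratio_zero (u v u' v' : ℝ) (h' : ¬ ((∃ n : ℤ, u' = n) ∧ ∃ n : ℤ, v' = n))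
    (hB : BB u' < BB u) :
    Tendsto (fun τ : ℂ => KK u v τ / KK u' v' τ) LL (𝓝 0) := by
  rw [tendsto_zero_iff_norm_tendsto_zero]
  have h := ratio_lim u v u' v' h'
  have : Tendsto (fun τ : ℂ => π * (BB u - BB u') * τ.im) LL atTop :=
    Tendsto.const_mul_atTop (mul_pos Real.pi_pos (by linarith)) tendsto_comap
  have h2 := h.mul (Real.tendsto_exp_neg_atTop_nhds_zero.comp this)
  rw [mul_zero] at h2
  refine h2.congr fun τ => ?_
  rw [mul_assoc, Function.comp_apply, ← Real.exp_add]
  simp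

lemma KK_diff (u v : ℂ) {τ : ℂ} (hτ : 0 < τ.im) : DifferentiableAt ℂ (fun τ => KK u v τ) τ := by
  unfold KK th
  refine DifferentiableAt.mul (by fun_prop) ?_
  have h := (hasFDerivAt_jacobiTheta₂ (u * τ + v + 1 / 2 - τ / 2) hτ).differentiableAt
  have : DifferentiableAt ℂ (fun τ : ℂ => (u * τ + v + 1 / 2 - τ / 2, τ)) τ := by fun_prop
  exact DifferentiableAt.comp (g := fun p : ℂ × ℂ => jacobiTheta₂ p.1 p.2)
    (f := fun τ : ℂ => (u * τ + v + 1 / 2 - τ / 2, τ)) τ h this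

lemma KK_shift (u v τ : ℂ) (n k : ℤ) :
    KK (u + n) (v + k) τ = cexp (π * Complex.I * (n + k + k * u - n * v - n * k)) * KK u v τ := by
  have h1 : ∀ (w : ℂ) (n : ℤ), KK (w + n) v τ = cexp (π * Complex.I * (n - n * v)) * KK w v τ := by
    intro w n
    induction n using Int.induction_on with
    | zero => simp
    | succ n ih =>
      rw [show w + (((n : ℤ) + 1 : ℤ) : ℂ) = (w + (n : ℤ)) + 1 by push_cast; ring, KK_add_left, ih,
        ← mul_assoc, neg_eq_neg_one_mul, ← Complex.exp_pi_mul_I, ← Complex.exp_add, ← Complex.exp_add]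
      congr 2; push_cast; ring
    | pred n ih =>
      have h := KK_add_left (w + ((-(n : ℤ) - 1 : ℤ) : ℂ)) v τ
      rw [show w + ((-(n : ℤ) - 1 : ℤ) : ℂ) + 1 = w + (-(n : ℤ) : ℤ) by push_cast; ring, ih] at h
      rw [neg_eq_neg_one_mul (cexp (-(π * Complex.I * v))), ← Complex.exp_pi_mul_I, ← Complex.exp_add] at h
      have h2 := congrArg (cexp (-(π * Complex.I + -(π * Complex.I * v))) * ·) h
      simp only [← mul_assoc, ← Complex.exp_add, neg_add_cancel, Complex.exp_zero, one_mul] at h2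
      rw [← h2]
      congr 2; push_cast; ring
  have h2 : ∀ (w x : ℂ) (k : ℤ), KK w (x + k) τ = cexp (π * Complex.I * (k + k * w)) * KK w x τ := by
    intro w x k
    induction k using Int.induction_on with
    | zero => simp
    | succ n ih =>
      rw [show x + (((n : ℤ) + 1 : ℤ) : ℂ) = (x + (n : ℤ)) + 1 by push_cast; ring, KK_add_right, ih,
        ← mul_assoc, neg_eq_neg_one_mul, ← Complex.exp_pi_mul_I, ← Complex.exp_add, ← Complex.exp_add]
      congr 2; push_cast; ring
    | pred n ih =>
      have h := KK_add_right w (x + ((-(n : ℤ) - 1 : ℤ) : ℂ)) τ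
      rw [show x + ((-(n : ℤ) - 1 : ℤ) : ℂ) + 1 = x + (-(n : ℤ) : ℤ) by push_cast; ring, ih] at h
      rw [neg_eq_neg_one_mul (cexp (π * Complex.I * w)), ← Complex.exp_pi_mul_I, ← Complex.exp_add] at h
      have h2 := congrArg (cexp (-(π * Complex.I + (π * Complex.I * w))) * ·) h
      simp only [← mul_assoc, ← Complex.exp_add, neg_add_cancel, Complex.exp_zero, one_mul] at h2
      rw [← h2]
      congr 2; push_cast; ring
  rw [h2, h1, ← mul_assoc, ← Complex.exp_add]
  rw [show cexp (π * Complex.I * (k + k * (u + n)) + π * Complex.I * (n - n * v)) =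
    cexp (π * Complex.I * (n + k + k * u - n * v - n * k)) from ?_]
  rw [Complex.exp_eq_exp_iff_exists_int]
  exact ⟨n * k, by push_cast; ring⟩

lemma coe_smul_formula (γ : SL(2, ℤ)) (σ : ℍ) :
    ((γ • σ : ℍ) : ℂ) = ((γ 0 0 : ℤ) * σ + (γ 0 1 : ℤ)) / ((γ 1 0 : ℤ) * σ + (γ 1 1 : ℤ)) := by
  rw [UpperHalfPlane.coe_specialLinearGroup_apply]
  simp

lemma ratio_tr (γ : SL(2, ℤ)) (σ : ℍ) (u v u' v' : ℂ) :
    KK u v ((γ • σ : ℍ) : ℂ) / KK u' v' ((γ • σ : ℍ) : ℂ) =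
    KK (u * (γ 0 0 : ℤ) + v * (γ 1 0 : ℤ)) (u * (γ 0 1 : ℤ) + v * (γ 1 1 : ℤ)) σ /
    KK (u' * (γ 0 0 : ℤ) + v' * (γ 1 0 : ℤ)) (u' * (γ 0 1 : ℤ) + v' * (γ 1 1 : ℤ)) σ := by
  obtain ⟨D, hD, h⟩ := KTr_all γ σ
  rw [h, h, mul_div_mul_left _ _ hD]

/-- the functions on `ℂ` -/
def gC (τ : ℂ) : ℂ := (KK (1 / 2) 0 (6 * τ) / KK (1 / 6) 0 (6 * τ)) ^ 3
/-- auxiliary function, equal to `g + 1` -/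
def fC (τ : ℂ) : ℂ := (KK (1 / 3) 0 (6 * τ) / KK (1 / 6) 0 (6 * τ)) ^ 4
/-- Fricke transform of `g` -/
def wC (τ : ℂ) : ℂ := (KK 0 (-1 / 2) τ / KK 0 (-1 / 6) τ) ^ 3

lemma coe_hsmul (τ : ℍ) : ((hsmul 6 τ : ℍ) : ℂ) = 6 * τ := by
  simp [hsmul]

lemma gOne6_eq (τ : ℍ) : gOne6 τ = gC τ := by
  obtain ⟨C, hC, h⟩ := siegel_eq_KK (hsmul 6 τ)
  rw [gOne6, h, h, coe_hsmul, ← inv_pow, ← mul_pow, ← div_eq_mul_inv, mul_div_mul_left _ _ hC, gC]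
  norm_num

lemma inv_aux {γ : SL(2, ℤ)} (hγ : γ ∈ Gamma1 6) (τ : ℍ) : ∃ m β : ℤ, ∀ a b : ℤ,
    KK (a / 6) 0 (6 * (γ • τ : ℍ)) / KK (b / 6) 0 (6 * (γ • τ : ℍ)) =
     cexp (π * Complex.I * ((a * m + a * β - a * m * (a * β)) + a * β * (a / 6))) /
     cexp (π * Complex.I * ((b * m + b * β - b * m * (b * β)) + b * β * (b / 6))) *
      (KK (a / 6) 0 (6 * τ) / KK (b / 6) 0 (6 * τ)) := by
  rw [Gamma1_mem] at hγ
  obtain ⟨h1, h2, h3⟩ := hγ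
  have h1' : ∃ m, γ 0 0 = 1 + 6 * m := by
    have := (ZMod.intCast_eq_intCast_iff_dvd_sub 1 (γ 0 0) 6).mp (by simpa using h1.symm)
    obtain ⟨m, hm⟩ := this
    exact ⟨m, by push_cast at hm; linarith⟩
  have h3' : ∃ c, γ 1 0 = 6 * c := by
    have := (ZMod.intCast_zmod_eq_zero_iff_dvd (γ 1 0) 6).mp h3
    obtain ⟨m, hm⟩ := this
    exact ⟨m, by push_cast at hm; linarith⟩
  obtain ⟨m, hm⟩ := h1'
  obtain ⟨c, hc⟩ := h3'
  have hdet := Matrix.det_fin_two γ.1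
  rw [γ.2] at hdet
  refine ⟨m, γ 0 1, fun a b => ?_⟩
  let γ' : SL(2, ℤ) := ⟨!![γ 0 0, 6 * γ 0 1; c, γ 1 1], by
    rw [Matrix.det_fin_two_of]; 
    have : γ.1 0 0 * γ.1 1 1 - γ.1 0 1 * γ.1 1 0 = γ 0 0 * γ 1 1 - γ 0 1 * γ 1 0 := rfl
    rw [this, hc] at hdet
    linarith⟩
  have hz : 6 * ((γ • τ : ℍ) : ℂ) = ((γ' • hsmul 6 τ : ℍ) : ℂ) := by
    rw [coe_smul_formula, coe_smul_formula, coe_hsmul]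
    have e1 : γ' 0 0 = γ 0 0 := rfl
    have e2 : γ' 0 1 = 6 * γ 0 1 := rfl
    have e3 : γ' 1 0 = c := rfl
    have e4 : γ' 1 1 = γ 1 1 := rfl
    rw [e1, e2, e3, e4, hc]
    push_cast
    rw [← mul_div_assoc]
    congr 1 <;> ring
  rw [hz, ratio_tr, coe_hsmul]
  have e1 : γ' 0 0 = 1 + 6 * m := hm
  have e2 : γ' 0 1 = 6 * γ 0 1 := rfl
  rw [e1, e2]
  have key : ∀ a : ℤ, KK (a / 6 * ((1 + 6 * m : ℤ) : ℂ) + 0 * (γ' 1 0 : ℤ))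
      (a / 6 * ((6 * γ 0 1 : ℤ) : ℂ) + 0 * (γ' 1 1 : ℤ)) (6 * τ) =
      cexp (π * Complex.I * ((a * m + a * (γ 0 1 : ℤ) - a * m * (a * (γ 0 1 : ℤ))) + a * (γ 0 1 : ℤ) * (a / 6))) *
      KK (a / 6) 0 (6 * τ) := by
    intro a
    have := KK_shift (a / 6) 0 (6 * τ) (a * m) (a * γ 0 1)
    rw [show (a / 6 * ((1 + 6 * m : ℤ) : ℂ) + 0 * (γ' 1 0 : ℤ)) = a / 6 + (a * m : ℤ) by push_cast; ring,
      show (a / 6 * ((6 * γ 0 1 : ℤ) : ℂ) + 0 * (γ' 1 1 : ℤ)) = 0 + (a * γ 0 1 : ℤ) by push_cast; ring, this]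
    congr 2
    push_cast; ring
  rw [key, key, mul_div_mul_comm]

lemma gC_inv {γ : SL(2, ℤ)} (hγ : γ ∈ Gamma1 6) (τ : ℍ) : gC (γ • τ : ℍ) = gC τ := by
  obtain ⟨m, β, h⟩ := inv_aux hγ τ
  have := h 3 1
  rw [show ((3 : ℤ) : ℂ) / 6 = 1 / 2 by norm_num, show ((1 : ℤ) : ℂ) / 6 = 1 / 6 by norm_num] at this
  unfold gC
  rw [this, mul_pow,
    ← Complex.exp_sub, ← Complex.exp_nat_mul]
  rw [show cexp _ = 1 from ?_, one_mul]
  rw [Complex.exp_eq_one_iff]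
  refine ⟨3 * m + 5 * β - 12 * m * β, by push_cast; ring⟩

lemma fC_inv {γ : SL(2, ℤ)} (hγ : γ ∈ Gamma1 6) (τ : ℍ) : fC (γ • τ : ℍ) = fC τ := by
  obtain ⟨m, β, h⟩ := inv_aux hγ τ
  have := h 2 1
  rw [show ((2 : ℤ) : ℂ) / 6 = 1 / 3 by norm_num, show ((1 : ℤ) : ℂ) / 6 = 1 / 6 by norm_num] at this
  unfold fC
  rw [this, mul_pow,
    ← Complex.exp_sub, ← Complex.exp_nat_mul]
  rw [show cexp _ = 1 from ?_, one_mul]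
  rw [Complex.exp_eq_one_iff]
  refine ⟨2 * m + 3 * β - 6 * m * β, by push_cast; ring⟩

lemma wC_inv {γ : SL(2, ℤ)} (hγ : γ ∈ Gamma1 6) (τ : ℍ) : wC (γ • τ : ℍ) = wC τ := by
  rw [Gamma1_mem] at hγ
  obtain ⟨h1, h2, h3⟩ := hγ
  have h1' : ∃ m, γ 1 1 = 1 + 6 * m := by
    have := (ZMod.intCast_eq_intCast_iff_dvd_sub 1 (γ 1 1) 6).mp (by simpa using h2.symm)
    obtain ⟨m, hm⟩ := this
    exact ⟨m, by push_cast at hm; linarith⟩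
  have h3' : ∃ c, γ 1 0 = 6 * c := by
    have := (ZMod.intCast_zmod_eq_zero_iff_dvd (γ 1 0) 6).mp h3
    obtain ⟨m, hm⟩ := this
    exact ⟨m, by push_cast at hm; linarith⟩
  obtain ⟨m, hm⟩ := h1'
  obtain ⟨c, hc⟩ := h3'
  unfold wC
  rw [ratio_tr, hm, hc]
  have e1 := KK_shift 0 (-1 / 2) τ (-3 * c) (-3 * m)
  have e2 := KK_shift 0 (-1 / 6) τ (-c) (-m)
  rw [show (0 * (γ 0 0 : ℤ) + -1 / 2 * ((6 * c : ℤ) : ℂ) : ℂ) = 0 + ((-3 * c : ℤ) : ℂ) by push_cast; ring,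
    show (0 * (γ 0 1 : ℤ) + -1 / 2 * ((1 + 6 * m : ℤ) : ℂ) : ℂ) = -1 / 2 + ((-3 * m : ℤ) : ℂ) by push_cast; ring,
    show (0 * (γ 0 0 : ℤ) + -1 / 6 * ((6 * c : ℤ) : ℂ) : ℂ) = 0 + ((-c : ℤ) : ℂ) by push_cast; ring,
    show (0 * (γ 0 1 : ℤ) + -1 / 6 * ((1 + 6 * m : ℤ) : ℂ) : ℂ) = -1 / 6 + ((-m : ℤ) : ℂ) by push_cast; ring,
    e1, e2, mul_div_mul_comm, mul_pow, ← Complex.exp_sub, ← Complex.exp_nat_mul]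
  rw [show cexp _ = 1 from ?_, one_mul]
  rw [Complex.exp_eq_one_iff]
  refine ⟨-3 * m - 5 * c - 12 * m * c, by push_cast; ring⟩

/-- cusp representative -/
def c2 : SL(2, ℤ) := ⟨!![1, 0; 2, 1], by simp⟩
/-- cusp representative -/
def c3 : SL(2, ℤ) := ⟨!![1, 0; 3, 1], by simp⟩
/-- auxiliary matrix -/
def d2 : SL(2, ℤ) := ⟨!![3, -1; 1, 0], by simp⟩
/-- auxiliary matrix -/
def d3 : SL(2, ℤ) := ⟨!![2, -1; 1, 0], by simp⟩
/-- auxiliary matrix -/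
def S' : SL(2, ℤ) := ⟨!![0, 1; -1, 0], by simp⟩

/-- `(a τ + b)/d` -/
def aff (a b d : ℕ) (ha : 0 < a) (hd : 0 < d) (τ : ℍ) : ℍ :=
  ⟨((a : ℂ) * τ + b) / d, by
    have h1 : ((a : ℂ) * τ + b) / d = ((a / d : ℝ) : ℂ) * τ + ((b / d : ℝ) : ℂ) := by
      push_cast; ring
    rw [h1, Complex.add_im, Complex.im_ofReal_mul, Complex.ofReal_im, add_zero]
    have : (0 : ℝ) < a := by exact_mod_cast ha
    have : (0 : ℝ) < d := by exact_mod_cast hd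
    have := τ.2
    positivity⟩

lemma coe_aff (a b d : ℕ) (ha : 0 < a) (hd : 0 < d) (τ : ℍ) :
    ((aff a b d ha hd τ : ℍ) : ℂ) = ((a : ℂ) * τ + b) / d := rfl

open Filter in
lemma aff_tendsto (a b d : ℕ) (ha : 0 < a) (hd : 0 < d) :
    Tendsto (fun τ : ℍ => ((aff a b d ha hd τ : ℍ) : ℂ)) atImInfty LL := by
  rw [LL, tendsto_comap_iff]
  have h1 : ∀ τ : ℍ, (((aff a b d ha hd τ : ℍ) : ℂ)).im = (a / d : ℝ) * τ.im := by
    intro τ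
    have h1 : ((a : ℂ) * τ + b) / d = ((a / d : ℝ) : ℂ) * τ + ((b / d : ℝ) : ℂ) := by
      push_cast; ring
    rw [coe_aff, h1, Complex.add_im, Complex.im_ofReal_mul, Complex.ofReal_im, add_zero]; rfl
  have : (0 : ℝ) < a := by exact_mod_cast ha
  have : (0 : ℝ) < d := by exact_mod_cast hd
  refine (Tendsto.const_mul_atTop (show (0 : ℝ) < a / d by positivity) tendsto_comap).congr fun τ => ?_
  exact (h1 τ).symm

lemma six_S (τ : ℍ) : (6 : ℂ) * ((ModularGroup.S • τ : ℍ) : ℂ) =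
    ((ModularGroup.S • aff 1 0 6 (by norm_num) (by norm_num) τ : ℍ) : ℂ) := by
  have := τ.ne_zero
  rw [coe_smul_formula, coe_smul_formula, coe_aff]
  simp [ModularGroup.S]
  field_simp

lemma six_c2 (τ : ℍ) : (6 : ℂ) * ((c2 • τ : ℍ) : ℂ) =
    ((d2 • aff 2 1 3 (by norm_num) (by norm_num) τ : ℍ) : ℂ) := by
  have h := (aff 2 1 3 (by norm_num) (by norm_num) τ).ne_zero
  rw [coe_aff] at h
  rw [coe_smul_formula, coe_smul_formula, coe_aff]
  have h2 : (2 : ℂ) * τ + 1 ≠ 0 := by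
    intro h'; apply h; push_cast; rw [h']; simp
  simp [c2, d2]
  field_simp
  ring

lemma six_c3 (τ : ℍ) : (6 : ℂ) * ((c3 • τ : ℍ) : ℂ) =
    ((d3 • aff 3 1 2 (by norm_num) (by norm_num) τ : ℍ) : ℂ) := by
  have h := (aff 3 1 2 (by norm_num) (by norm_num) τ).ne_zero
  rw [coe_aff] at h
  rw [coe_smul_formula, coe_smul_formula, coe_aff]
  have h2 : (3 : ℂ) * τ + 1 ≠ 0 := by
    intro h'; apply h; push_cast; rw [h']; simp
  simp [c3, d3]
  field_simp
  ring

lemma gS_eq (τ : ℍ) : gC (ModularGroup.S • τ : ℍ) = wC (aff 1 0 6 (by norm_num) (by norm_num) τ : ℍ) := by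
  unfold gC wC
  rw [six_S, ratio_tr]
  simp [ModularGroup.S, neg_div]

lemma wS_eq (τ : ℍ) : wC (ModularGroup.S • τ : ℍ) = gC (aff 1 0 6 (by norm_num) (by norm_num) τ : ℍ) := by
  unfold gC wC
  have : ModularGroup.S • τ = S' • τ := by
    ext1
    rw [coe_smul_formula, coe_smul_formula]
    simp [ModularGroup.S, S', div_neg, neg_div]
  rw [this, ratio_tr, coe_aff]
  rw [show (6 : ℂ) * ((((1 : ℕ) : ℂ) * τ + (0 : ℕ)) / (6 : ℕ)) = τ by push_cast; ring]
  simp [S', neg_div]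

open Filter Topology in
lemma wC_tendsto : Tendsto wC LL (𝓝 8) := by
  have h1 := KK0_tendsto (-1 / 2)
  have h2 := KK0_tendsto (-1 / 6)
  push_cast at h1 h2
  have h3 : cexp (2 * π * Complex.I * (-1 / 2)) = -1 := by
    rw [show 2 * π * Complex.I * (-1 / 2) = -(π * Complex.I) by ring, Complex.exp_neg,
      Complex.exp_pi_mul_I]; norm_num
  have hz : cexp (2 * π * Complex.I * (-1 / 6)) = cexp (-(π * Complex.I / 3)) := by congr 1; ring
  have hval : cexp (π * Complex.I / 3) = 1 / 2 + (Real.sqrt 3 / 2 : ℝ) * Complex.I := by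
    rw [show π * Complex.I / 3 = ((π / 3 : ℝ) : ℂ) * Complex.I by push_cast; ring, Complex.exp_mul_I,
      ← Complex.ofReal_cos, ← Complex.ofReal_sin, Real.cos_pi_div_three, Real.sin_pi_div_three]
    push_cast; ring
  set ζ := cexp (π * Complex.I / 3) with hζ
  have hs : ((Real.sqrt 3 : ℝ) : ℂ) ^ 2 = 3 := by
    have := Real.sq_sqrt (show (0 : ℝ) ≤ 3 by norm_num)
    exact_mod_cast this
  have hq : ζ ^ 2 - ζ + 1 = 0 := by
    rw [hval]; push_cast; ring_nf; rw [Complex.I_sq, hs]; ring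
  have hζ0 : ζ ≠ 0 := Complex.exp_ne_zero _
  have hinv : cexp (-(π * Complex.I / 3)) = 1 - ζ := by
    rw [Complex.exp_neg, ← hζ]
    field_simp
    linear_combination hq
  have hc : ζ ^ 3 = -1 := by linear_combination (ζ + 1) * hq
  rw [hz, hinv] at h2
  have hne : cexp (-(π * Complex.I * (-1 / 6))) * (1 - (1 - ζ)) ≠ 0 := by
    refine mul_ne_zero (Complex.exp_ne_zero _) ?_
    simpa using hζ0
  have h := (h1.div h2 hne).pow 3
  have hval2 : (cexp (-(π * Complex.I * (-1 / 2))) * (1 - cexp (2 * π * Complex.I * (-1 / 2))) /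
      (cexp (-(π * Complex.I * (-1 / 6))) * (1 - (1 - ζ)))) ^ 3 = 8 := by
    rw [h3, mul_div_mul_comm, ← Complex.exp_sub, show -(π * Complex.I * (-1 / 2)) -
      -(π * Complex.I * (-1 / 6)) = π * Complex.I / 3 by ring, ← hζ, mul_pow, hc, div_pow]
    rw [sub_sub_cancel, hc]; norm_num
  rw [hval2] at h
  exact h

lemma not_int_of {u : ℝ} (k : ℤ) (h1 : (k : ℝ) < u) (h2 : u < k + 1) : ¬ ∃ n : ℤ, u = n := by
  rintro ⟨n, rfl⟩
  have : k < n := by exact_mod_cast h1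
  have : n < k + 1 := by exact_mod_cast h2
  omega

lemma BB_eq (u : ℝ) (k : ℤ) (h1 : (k : ℝ) ≤ u) (h2 : u < k + 1) : BB u = (u - k) ^ 2 - (u - k) := by
  have : ⌊u⌋ = k := Int.floor_eq_iff.mpr ⟨h1, h2⟩
  rw [BB, Int.fract, this]

open Filter in
lemma bdd_of {f : ℂ → ℂ} {s : ℍ → ℂ} (h : ∃ C : ℝ, ∀ᶠ τ : ℂ in LL, ‖f τ‖ ≤ C)
    (hs : Tendsto s atImInfty LL) (k : ℕ) : IsBoundedAtImInfty (fun τ => f (s τ) ^ k) := by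
  obtain ⟨C, hC⟩ := h
  have : IsBoundedAtImInfty (fun τ => f (s τ)) := by
    refine Asymptotics.IsBigO.of_bound C ?_
    filter_upwards [hs.eventually hC] with τ h
    simpa using h
  have h2 : (fun τ => f (s τ) ^ k) =O[atImInfty] (fun τ => (1 : ℍ → ℝ) τ ^ k) := Asymptotics.IsBigO.pow this k
  exact h2.trans (Asymptotics.isBigO_of_le _ fun τ => by simp)

lemma g_c2 : IsBoundedAtImInfty (fun τ : ℍ => gC (c2 • τ : ℍ)) := by
  have h := ratio_bdd (3 / 2) (-1 / 2) (1 / 2) (-1 / 6)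
    (fun h => not_int_of 0 (by norm_num) (by norm_num) h.1)
    (by rw [BB_eq _ 0 (by norm_num) (by norm_num), BB_eq _ 1 (by norm_num) (by norm_num)]; norm_num)
  refine (bdd_of h (aff_tendsto 2 1 3 (by norm_num) (by norm_num)) 3).congr_left fun τ => ?_
  unfold gC
  rw [six_c2, ratio_tr]
  simp [d2]
  norm_num

lemma g_c3 : Filter.Tendsto (fun τ : ℍ => gC (c3 • τ : ℍ)) atImInfty (nhds 0) := by
  have h := ratio_zero 1 (-1 / 2) (1 / 3) (-1 / 6)
    (fun h => not_int_of 0 (by norm_num) (by norm_num) h.1)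
    (by rw [BB_eq _ 0 (by norm_num) (by norm_num), BB_eq _ 1 (by norm_num) (by norm_num)]; norm_num)
  have h2 := (h.comp (aff_tendsto 3 1 2 (by norm_num) (by norm_num))).pow 3
  rw [zero_pow (by norm_num)] at h2
  refine h2.congr fun τ => ?_
  unfold gC
  rw [six_c3, ratio_tr]
  simp [d3]
  norm_num

lemma g_S : Filter.Tendsto (fun τ : ℍ => gC (ModularGroup.S • τ : ℍ)) atImInfty (nhds 8) := by
  refine (wC_tendsto.comp (aff_tendsto 1 0 6 (by norm_num) (by norm_num))).congr fun τ => ?_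
  rw [gS_eq]; rfl

lemma f_c2 : Filter.Tendsto (fun τ : ℍ => fC (c2 • τ : ℍ)) atImInfty (nhds 0) := by
  have h := ratio_zero 1 (-1 / 3) (1 / 2) (-1 / 6)
    (fun h => not_int_of 0 (by norm_num) (by norm_num) h.1)
    (by rw [BB_eq _ 0 (by norm_num) (by norm_num), BB_eq _ 1 (by norm_num) (by norm_num)]; norm_num)
  have h2 := (h.comp (aff_tendsto 2 1 3 (by norm_num) (by norm_num))).pow 4
  rw [zero_pow (by norm_num)] at h2
  refine h2.congr fun τ => ?_
  unfold fC
  rw [six_c2, ratio_tr]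
  simp [d2]
  norm_num

lemma f_c3 : IsBoundedAtImInfty (fun τ : ℍ => fC (c3 • τ : ℍ)) := by
  have h := ratio_bdd (2 / 3) (-1 / 3) (1 / 3) (-1 / 6)
    (fun h => not_int_of 0 (by norm_num) (by norm_num) h.1)
    (by rw [BB_eq _ 0 (by norm_num) (by norm_num), BB_eq _ 0 (by norm_num) (by norm_num)]; norm_num)
  refine (bdd_of h (aff_tendsto 3 1 2 (by norm_num) (by norm_num)) 4).congr_left fun τ => ?_
  unfold fC
  rw [six_c3, ratio_tr]
  simp [d3]
  norm_num

lemma f_S : IsBoundedAtImInfty (fun τ : ℍ => fC (ModularGroup.S • τ : ℍ)) := by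
  have h := ratio_bdd 0 (-1 / 3) 0 (-1 / 6)
    (fun h => not_int_of (-1) (by norm_num) (by norm_num) h.2) le_rfl
  refine (bdd_of h (aff_tendsto 1 0 6 (by norm_num) (by norm_num)) 4).congr_left fun τ => ?_
  unfold fC
  rw [six_S, ratio_tr]
  simp [ModularGroup.S]
  norm_num

open Filter in
lemma coe_tendsto : Tendsto (fun τ : ℍ => (τ : ℂ)) atImInfty LL := by
  rw [LL, tendsto_comap_iff]; exact tendsto_comap

lemma w_inf : Filter.Tendsto (fun τ : ℍ => wC τ) atImInfty (nhds 8) := wC_tendsto.comp coe_tendsto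

lemma w_c2 : IsBoundedAtImInfty (fun τ : ℍ => wC (c2 • τ : ℍ)) := by
  have h := ratio_bdd (-1) (-1 / 2) (-1 / 3) (-1 / 6)
    (fun h => not_int_of (-1) (by norm_num) (by norm_num) h.1)
    (by rw [BB_eq _ (-1) (by norm_num) (by norm_num), BB_eq _ (-1) (by norm_num) (by norm_num)]; norm_num)
  refine (bdd_of h coe_tendsto 3).congr_left fun τ => ?_
  unfold wC
  rw [ratio_tr]
  simp [c2]
  norm_num

lemma w_c3 : IsBoundedAtImInfty (fun τ : ℍ => wC (c3 • τ : ℍ)) := by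
  have h := ratio_bdd (-3 / 2) (-1 / 2) (-1 / 2) (-1 / 6)
    (fun h => not_int_of (-1) (by norm_num) (by norm_num) h.1)
    (by rw [BB_eq _ (-1) (by norm_num) (by norm_num), BB_eq _ (-2) (by norm_num) (by norm_num)]; norm_num)
  refine (bdd_of h coe_tendsto 3).congr_left fun τ => ?_
  unfold wC
  rw [ratio_tr]
  simp [c3]
  norm_num

set_option maxRecDepth 100000 in
lemma zmod6_rep : ∀ c d : ZMod 6, (∃ a b : ZMod 6, a * d - b * c = 1) →
    ∃ j : ZMod 6, (c = 0 ∧ (d = 1 ∨ d = -1)) ∨ (d + j * c = 0 ∧ (c = 1 ∨ c = -1)) ∨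
      ((c = 2 ∧ d + j * c = 1) ∨ (c = -2 ∧ d + j * c = -1)) ∨
      ((c = 3 ∧ d + j * c = 1) ∨ (c = -3 ∧ d + j * c = -1)) := by
  decide

lemma SL_det (M : SL(2, ℤ)) : M 0 0 * M 1 1 - M 0 1 * M 1 0 = 1 := by
  have := M.det_coe
  rwa [Matrix.det_fin_two] at this

lemma pm_gamma (M : SL(2, ℤ)) (h0 : ((M 1 0 : ℤ) : ZMod 6) = 0)
    (h1 : ((M 1 1 : ℤ) : ZMod 6) = 1 ∨ ((M 1 1 : ℤ) : ZMod 6) = -1) :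
    ∃ δ ∈ Gamma1 6, ∀ τ : ℍ, M • τ = δ • τ := by
  have hd := congrArg (Int.cast : ℤ → ZMod 6) (SL_det M)
  push_cast at hd
  rw [h0] at hd
  rcases h1 with h1 | h1 <;> rw [h1] at hd
  · exact ⟨M, (Gamma1_mem _ _).2 ⟨by simpa using hd, h1, h0⟩, fun _ => rfl⟩
  · refine ⟨-M, (Gamma1_mem _ _).2 ⟨?_, ?_, ?_⟩, fun τ => (ModularGroup.SL_neg_smul M τ).symm⟩
    · simpa using hd
    · simp [h1]
    · simp [h0]

/-- inverse of c2 -/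
def c2i : SL(2, ℤ) := ⟨!![1, 0; -2, 1], by simp⟩
/-- inverse of c3 -/
def c3i : SL(2, ℤ) := ⟨!![1, 0; -3, 1], by simp⟩

/-- bottom row and cusp representatives -/
lemma cusp_rep (γ : SL(2, ℤ)) : ∃ ρ : SL(2, ℤ),
    (ρ = 1 ∨ ρ = ModularGroup.S ∨ ρ = c2 ∨ ρ = c3) ∧
    ∃ j : ℤ, ∃ δ ∈ Gamma1 6, ∀ τ : ℍ, γ • τ = δ • ρ • ((ModularGroup.T ^ j) • τ : ℍ) := by
  have hd := congrArg (Int.cast : ℤ → ZMod 6) (SL_det γ)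
  push_cast at hd
  obtain ⟨j, hj⟩ := zmod6_rep _ _ ⟨_, _, hd⟩
  obtain ⟨i, rfl⟩ := ZMod.intCast_surjective j
  have key : ∀ ρ : SL(2, ℤ), ((( γ * ModularGroup.T ^ i * ρ⁻¹) 1 0 : ℤ) : ZMod 6) = 0 →
      (((( γ * ModularGroup.T ^ i * ρ⁻¹) 1 1 : ℤ) : ZMod 6) = 1 ∨
       ((( γ * ModularGroup.T ^ i * ρ⁻¹) 1 1 : ℤ) : ZMod 6) = -1) →
      ∃ j : ℤ, ∃ δ ∈ Gamma1 6, ∀ τ : ℍ, γ • τ = δ • ρ • ((ModularGroup.T ^ j) • τ : ℍ) := by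
    intro ρ h0 h1
    obtain ⟨δ, hδ, h⟩ := pm_gamma _ h0 h1
    refine ⟨-i, δ, hδ, fun τ => ?_⟩
    rw [← h]
    simp only [smul_smul]
    congr 1
    group
  have e : ∀ ρ : SL(2, ℤ), ∀ k, (γ * ModularGroup.T ^ i * ρ⁻¹) 1 k =
      γ 1 0 * (ρ⁻¹) 0 k + (γ 1 1 + i * γ 1 0) * (ρ⁻¹) 1 k := by
    intro ρ k
    generalize ρ⁻¹ = R
    rw [Matrix.SpecialLinearGroup.coe_mul, Matrix.SpecialLinearGroup.coe_mul,
      ModularGroup.coe_T_zpow]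
    fin_cases k <;> simp [Matrix.mul_apply, Fin.sum_univ_two] <;> ring_nf <;> exact Or.inl trivial
  have i2 : c2⁻¹ = c2i := by
    rw [inv_eq_iff_mul_eq_one]; exact Subtype.ext (by decide)
  have i3 : c3⁻¹ = c3i := by
    rw [inv_eq_iff_mul_eq_one]; exact Subtype.ext (by decide)
  have iS : ModularGroup.S⁻¹ = S' := by
    rw [inv_eq_iff_mul_eq_one]; exact Subtype.ext (by decide)
  rcases hj with ⟨h0, h1⟩ | ⟨h0, h1⟩ | h | h
  · refine ⟨1, Or.inl rfl, key 1 ?_ ?_⟩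
    · rw [e]; push_cast; rw [h0]; simp
    · rw [e]; push_cast; rw [h0]; simpa using h1
  · refine ⟨_, Or.inr (Or.inl rfl), key _ ?_ ?_⟩
    · rw [e, iS]; push_cast; rw [h0]; simp [S']
    · rw [e, iS]; push_cast; rw [h0]; simpa [S'] using h1
  · refine ⟨_, Or.inr (Or.inr (Or.inl rfl)), key _ ?_ ?_⟩
    · rw [e, i2]; push_cast; rcases h with ⟨h0, h1⟩ | ⟨h0, h1⟩ <;> rw [h1, h0] <;> simp [c2i]
    · rw [e, i2]; push_cast; rcases h with ⟨h0, h1⟩ | ⟨h0, h1⟩ <;> rw [h1] <;> simp [c2i]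
  · refine ⟨_, Or.inr (Or.inr (Or.inr rfl)), key _ ?_ ?_⟩
    · rw [e, i3]; push_cast; rcases h with ⟨h0, h1⟩ | ⟨h0, h1⟩ <;> rw [h1, h0] <;> simp [c3i]
    · rw [e, i3]; push_cast; rcases h with ⟨h0, h1⟩ | ⟨h0, h1⟩ <;> rw [h1] <;> simp [c3i]

lemma T_tendsto (j : ℤ) : Filter.Tendsto (fun τ : ℍ => (ModularGroup.T ^ j) • τ) atImInfty atImInfty := by
  unfold atImInfty
  rw [Filter.tendsto_comap_iff]
  refine Filter.tendsto_comap.congr fun τ => ?_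
  simp only [Function.comp]
  rw [modular_T_zpow_smul]
  simp

lemma bdd_all {F : ℍ → ℂ} (hinv : ∀ γ ∈ Gamma1 6, ∀ τ : ℍ, F (γ • τ) = F τ)
    (h1 : IsBoundedAtImInfty F) (hS : IsBoundedAtImInfty (fun τ => F (ModularGroup.S • τ)))
    (h2 : IsBoundedAtImInfty (fun τ => F (c2 • τ))) (h3 : IsBoundedAtImInfty (fun τ => F (c3 • τ)))
    (γ : SL(2, ℤ)) : IsBoundedAtImInfty (fun τ => F (γ • τ)) := by
  obtain ⟨ρ, hρ, j, δ, hδ, h⟩ := cusp_rep γ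
  have hb : IsBoundedAtImInfty (fun τ => F (ρ • τ)) := by
    rcases hρ with rfl | rfl | rfl | rfl
    · simpa using h1
    · exact hS
    · exact h2
    · exact h3
  refine (hb.comp_tendsto (T_tendsto j)).congr_left fun τ => ?_
  simp only [Function.comp]
  rw [h, hinv δ hδ]

lemma const_of_bdd {F : ℍ → ℂ} (hF : MDifferentiable 𝓘(ℂ) 𝓘(ℂ) F)
    (hinv : ∀ γ ∈ Gamma1 6, ∀ τ : ℍ, F (γ • τ) = F τ)
    (h1 : IsBoundedAtImInfty F) (hS : IsBoundedAtImInfty (fun τ => F (ModularGroup.S • τ)))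
    (h2 : IsBoundedAtImInfty (fun τ => F (c2 • τ))) (h3 : IsBoundedAtImInfty (fun τ => F (c3 • τ))) :
    ∃ c : ℂ, ∀ τ, F τ = c := by
  let f : ModularForm ((Gamma1 6).map (Matrix.SpecialLinearGroup.mapGL ℝ)) 0 :=
    { toFun := F
      slash_action_eq' := by
        rintro _ ⟨γ, hγ, rfl⟩
        change SlashAction.map (0 : ℤ) γ F = F
        funext τ
        rw [ModularForm.SL_slash_apply, hinv γ hγ]
        simp
      holo' := hF
      bdd_at_cusps' := by
        intro c hc
        have hc' : IsCusp c (Matrix.SpecialLinearGroup.mapGL (n := Fin 2) (R := ℤ) ℝ).range :=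
          hc.mono (by rintro _ ⟨γ, _, rfl⟩; exact ⟨γ, rfl⟩)
        rw [OnePoint.isBoundedAt_iff_forall_SL2Z hc']
        intro γ _
        have := bdd_all hinv h1 hS h2 h3 γ
        refine this.congr_left fun τ => ?_
        rw [ModularForm.SL_slash_apply]
        simp }
  obtain ⟨c, hc⟩ := ModularForm.eq_const_of_weight_zero f
  exact ⟨c, fun τ => congrFun hc τ⟩

/-- local parameter at infinity of width `h` -/
def qq (h : ℝ) (τ : ℍ) : ℂ := Function.Periodic.qParam h τ

/-- `f` has the convergent expansion `p` in the parameter `qq h` -/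
def HasPS (h : ℝ) (f : ℍ → ℂ) (p : PowerSeries ℂ) : Prop :=
  ∀ τ : ℍ, HasSum (fun n : ℕ => p.coeff n * qq h τ ^ n) (f τ)

lemma qq_ne (h : ℝ) (τ : ℍ) : qq h τ ≠ 0 := Function.Periodic.qParam_ne_zero _

lemma qq_tendsto {h : ℝ} (hh : 0 < h) : Filter.Tendsto (qq h) atImInfty (nhds 0) :=
  qParam_tendsto_atImInfty hh

lemma qq_bdd {h : ℝ} (hh : 0 < h) : IsBoundedAtImInfty (qq h) :=
  (qq_tendsto hh).isBigO_one ℝ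

lemma HasPS.bdd {h : ℝ} (hh : 0 < h) {f p} (hf : HasPS h f p) : IsBoundedAtImInfty f :=
  isBoundedAtImInfty_of_hasSum_qExpansion (c := fun n => p.coeff n) hh (fun τ => by simpa using! hf τ)

lemma HasPS.add {h : ℝ} {f g p r} (hf : HasPS h f p) (hg : HasPS h g r) :
    HasPS h (fun τ => f τ + g τ) (p + r) := fun τ => by
  refine ((hf τ).add (hg τ)).congr_fun ?_
  intro n; simp [add_mul]

lemma HasPS.const (h : ℝ) (a : ℂ) : HasPS h (fun _ => a) (PowerSeries.C a) := fun τ => by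
  convert! hasSum_single (f := fun n : ℕ => (PowerSeries.C a).coeff n * qq h τ ^ n) 0 ?_ using 1
  · simp
  · intro n hn; simp [PowerSeries.coeff_C, hn]

lemma HasPS.q (h : ℝ) : HasPS h (qq h) PowerSeries.X := fun τ => by
  convert! hasSum_single (f := fun n : ℕ => (PowerSeries.X : PowerSeries ℂ).coeff n * qq h τ ^ n) 1 ?_ using 1
  · simp
  · intro n hn; simp [PowerSeries.coeff_X, hn]

lemma HasPS.mul {h : ℝ} {f g p r} (hf : HasPS h f p) (hg : HasPS h g r) :
    HasPS h (fun τ => f τ * g τ) (p * r) := fun τ => by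
  have h1 := (hf τ).summable.norm
  have h2 := (hg τ).summable.norm
  have h3 := tsum_mul_tsum_eq_tsum_sum_antidiagonal_of_summable_norm h1 h2
  have h4 := (summable_norm_sum_mul_antidiagonal_of_summable_norm h1 h2).of_norm.hasSum
  rw [← h3, (hf τ).tsum_eq, (hg τ).tsum_eq] at h4
  refine h4.congr_fun ?_
  intro n
  rw [PowerSeries.coeff_mul, Finset.sum_mul]
  refine Finset.sum_congr rfl fun x hx => ?_
  rw [← Finset.HasAntidiagonal.mem_antidiagonal.1 hx, pow_add]
  ring

lemma HasPS.congr {h : ℝ} {f g p r} (hf : HasPS h f p) (h1 : ∀ τ, f τ = g τ) (h2 : p = r) :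
    HasPS h g r := by
  subst h2; intro τ; rw [← h1]; exact hf τ

lemma HasPS.sub {h : ℝ} {f g p r} (hf : HasPS h f p) (hg : HasPS h g r) :
    HasPS h (fun τ => f τ - g τ) (p - r) :=
  (hf.add ((HasPS.const h (-1)).mul hg)).congr (fun τ => by ring) (by simp [sub_eq_add_neg])

lemma HasPS.pow {h : ℝ} {f p} (hf : HasPS h f p) (n : ℕ) : HasPS h (fun τ => f τ ^ n) (p ^ n) := by
  induction n with
  | zero => exact (HasPS.const h 1).congr (fun τ => by simp) (by simp)
  | succ n ih => exact (ih.mul hf).congr (fun τ => by ring) (by ring)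

lemma HasPS.shift1 {h : ℝ} {f u} (hf : HasPS h f (PowerSeries.X * u)) :
    HasPS h (fun τ => (qq h τ)⁻¹ * f τ) u := fun τ => by
  have := (hasSum_nat_add_iff' 1).2 (hf τ)
  have := this.mul_left ((qq h τ)⁻¹)
  simp only [Finset.range_one, Finset.sum_singleton, pow_zero, mul_one,
    PowerSeries.coeff_zero_X_mul, sub_zero] at this
  refine this.congr_fun fun n => ?_
  rw [PowerSeries.coeff_succ_X_mul, pow_succ]
  have := qq_ne h τ
  field_simp

lemma HasPS.shift {h : ℝ} {f u} (n : ℕ) (hf : HasPS h f (PowerSeries.X ^ n * u)) :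
    HasPS h (fun τ => (qq h τ ^ n)⁻¹ * f τ) u := by
  induction n generalizing f with
  | zero => simpa using hf
  | succ n ih =>
    rw [pow_succ', mul_assoc] at hf
    refine (ih hf.shift1).congr (fun τ => ?_) rfl
    rw [pow_succ, mul_inv, mul_assoc]

lemma HasPS.lim {h : ℝ} (hh : 0 < h) {f p} (hf : HasPS h f p) :
    Filter.Tendsto f atImInfty (nhds (p.coeff 0)) := by
  have h1 : HasPS h (fun τ => f τ - p.coeff 0) (PowerSeries.X * (PowerSeries.mk fun n => p.coeff (n + 1))) := by
    refine (hf.sub (HasPS.const h (p.coeff 0))).congr (fun _ => rfl) ?_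
    conv_lhs => enter [1]; rw [PowerSeries.eq_X_mul_shift_add_const p]
    simp
  have h2 := h1.shift1.bdd hh
  have h3 : Filter.Tendsto (fun τ => qq h τ * ((qq h τ)⁻¹ * (f τ - p.coeff 0))) atImInfty (nhds 0) := by
    have h4 : (fun τ => qq h τ * ((qq h τ)⁻¹ * (f τ - p.coeff 0))) =O[atImInfty] (fun τ => qq h τ * (1 : ℂ)) :=
      (Asymptotics.isBigO_refl _ _).mul (h2.trans (Asymptotics.isBigO_of_le _ (by simp)))
    exact h4.trans_tendsto (by simpa using qq_tendsto hh)
  have h5 := h3.add_const (p.coeff 0)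
  rw [zero_add] at h5
  refine h5.congr fun τ => ?_
  rw [mul_inv_cancel_left₀ (qq_ne h τ)]; ring

lemma atImInfty_neBot' : Filter.NeBot atImInfty := by
  unfold atImInfty
  refine Filter.comap_neBot fun s hs => ?_
  obtain ⟨a, ha⟩ := Filter.mem_atTop_sets.1 hs
  exact ⟨⟨⟨0, max a 1⟩, by simp⟩, ha _ (by simp [UpperHalfPlane.im])⟩

lemma factor (p : PowerSeries ℂ) (hp : p ≠ 0) : ∃ n u, p = PowerSeries.X ^ n * u ∧ PowerSeries.coeff 0 u ≠ 0 :=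
  ⟨_, _, PowerSeries.X_pow_order_mul_divXPowOrder.symm, by
    rw [PowerSeries.coeff_zero_eq_constantCoeff]
    rwa [Ne, PowerSeries.constantCoeff_divXPowOrder_eq_zero_iff]⟩

lemma HasPS.eq_zero {h : ℝ} (hh : 0 < h) {f p} (hf : HasPS h f p) (h0 : ∀ τ, f τ = 0) : p = 0 := by
  by_contra hp
  obtain ⟨n, u, rfl, hu⟩ := factor p hp
  have h1 := (hf.shift n).lim hh
  have := atImInfty_neBot'
  simp only [h0, mul_zero] at h1
  exact hu (tendsto_nhds_unique h1 tendsto_const_nhds)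

lemma HasPS.unique {h : ℝ} (hh : 0 < h) {f p r} (hf : HasPS h f p) (hr : HasPS h f r) : p = r :=
  sub_eq_zero.1 ((hf.sub hr).eq_zero hh (fun τ => sub_self _))

/-- `h`-periodicity -/
def Per (h : ℝ) (f : ℍ → ℂ) : Prop := ∀ τ : ℍ, f (h +ᵥ τ) = f τ

lemma Per.periodic {h : ℝ} {f} (hf : Per h f) : Function.Periodic (f ∘ ofComplex) h := by
  intro w
  by_cases! hw : 0 < Complex.im w
  · have : 0 < Complex.im (w + h) := by simp [hw]
    simp only [Function.comp_apply, ofComplex_apply_of_im_pos this, ofComplex_apply_of_im_pos hw]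
    convert! hf ⟨w, hw⟩ using 2
    ext
    simp [add_comm]
  · have : Complex.im (w + h) ≤ 0 := by simpa using hw
    simp [ofComplex_apply_of_im_nonpos this, ofComplex_apply_of_im_nonpos hw]

lemma exists_PS {h : ℝ} (hh : 0 < h) {f : ℍ → ℂ} (hp : Per h f) (hd : MDifferentiable 𝓘(ℂ) 𝓘(ℂ) f)
    (hb : IsBoundedAtImInfty f) : ∃ p, HasPS h f p :=
  ⟨qExpansion h f, fun τ => by simpa using! hasSum_qExpansion hh hp.periodic hd hb τ⟩

lemma qq_per {h : ℝ} (hh : 0 < h) : Per h (qq h) := by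
  intro τ
  unfold qq Function.Periodic.qParam
  rw [UpperHalfPlane.coe_vadd]
  have : (h : ℂ) ≠ 0 := by exact_mod_cast hh.ne'
  rw [show 2 * π * Complex.I * (h + τ) / h = 2 * π * Complex.I * τ / h + 2 * π * Complex.I by field_simp; ring]
  rw [Complex.exp_add, Complex.exp_two_pi_mul_I, mul_one]

lemma mdiff_of {F : ℂ → ℂ} (hF : ∀ τ : ℂ, 0 < τ.im → DifferentiableAt ℂ F τ) :
    MDifferentiable 𝓘(ℂ) 𝓘(ℂ) (fun τ : ℍ => F τ) := by
  rw [UpperHalfPlane.mdifferentiable_iff]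
  intro z hz
  refine ((hF z hz).differentiableWithinAt).congr (fun w hw => ?_) ?_
  · simp [ofComplex_apply_of_im_pos hw]
  · simp [ofComplex_apply_of_im_pos hz]

lemma qq_mdiff (h : ℝ) : MDifferentiable 𝓘(ℂ) 𝓘(ℂ) (qq h) :=
  mdiff_of (F := Function.Periodic.qParam h) fun τ _ => Function.Periodic.differentiable_qParam τ

lemma md_iff {f : ℍ → ℂ} : MDifferentiable 𝓘(ℂ) 𝓘(ℂ) f ↔
    ∀ τ : ℍ, DifferentiableAt ℂ (f ∘ ofComplex) τ := by
  constructor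
  · intro h τ
    exact UpperHalfPlane.mdifferentiableAt_iff.1 (h τ)
  · intro h τ
    exact UpperHalfPlane.mdifferentiableAt_iff.2 (h τ)

lemma md_inv {f : ℍ → ℂ} (hf : MDifferentiable 𝓘(ℂ) 𝓘(ℂ) f) (h0 : ∀ τ, f τ ≠ 0) :
    MDifferentiable 𝓘(ℂ) 𝓘(ℂ) (fun τ => (f τ)⁻¹) := by
  rw [md_iff] at *
  intro τ
  exact (hf τ).fun_inv (by simpa using h0 τ)

lemma md_mul {f g : ℍ → ℂ} (hf : MDifferentiable 𝓘(ℂ) 𝓘(ℂ) f) (hg : MDifferentiable 𝓘(ℂ) 𝓘(ℂ) g) :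
    MDifferentiable 𝓘(ℂ) 𝓘(ℂ) (fun τ => f τ * g τ) := by
  rw [md_iff] at *
  intro τ
  exact (hf τ).mul (hg τ)

lemma md_sub {f g : ℍ → ℂ} (hf : MDifferentiable 𝓘(ℂ) 𝓘(ℂ) f) (hg : MDifferentiable 𝓘(ℂ) 𝓘(ℂ) g) :
    MDifferentiable 𝓘(ℂ) 𝓘(ℂ) (fun τ => f τ - g τ) := by
  rw [md_iff] at *
  intro τ
  exact (hf τ).sub (hg τ)

lemma md_const (c : ℂ) : MDifferentiable 𝓘(ℂ) 𝓘(ℂ) (fun _ : ℍ => c) := by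
  rw [md_iff]
  intro τ
  exact differentiableAt_const c

lemma md_pow {f : ℍ → ℂ} (hf : MDifferentiable 𝓘(ℂ) 𝓘(ℂ) f) (n : ℕ) :
    MDifferentiable 𝓘(ℂ) 𝓘(ℂ) (fun τ => f τ ^ n) := by
  rw [md_iff] at *
  intro τ
  exact (hf τ).fun_pow n

lemma md_SL {f : ℍ → ℂ} (hf : MDifferentiable 𝓘(ℂ) 𝓘(ℂ) f) (γ : SL(2, ℤ)) :
    MDifferentiable 𝓘(ℂ) 𝓘(ℂ) (fun τ => f (γ • τ)) :=
  hf.comp (UpperHalfPlane.mdifferentiable_smul (by simp))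

/-- inverse of a power series expansion -/
lemma HasPS.inv {h : ℝ} (hh : 0 < h) {f p r} (hf : HasPS h f p) (hpr : p * r = 1)
    (hp : Per h f) (hd : MDifferentiable 𝓘(ℂ) 𝓘(ℂ) f) (h0 : ∀ τ, f τ ≠ 0) :
    HasPS h (fun τ => (f τ)⁻¹) r := by
  have hp0 : p.coeff 0 ≠ 0 := by
    intro h
    have := congrArg (PowerSeries.coeff 0) hpr
    rw [PowerSeries.coeff_zero_eq_constantCoeff] at h this
    rw [map_mul, h] at this
    simp at this
  have hb : IsBoundedAtImInfty (fun τ => (f τ)⁻¹) := ((hf.lim hh).inv₀ hp0).isBigO_one ℝ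
  obtain ⟨s, hs⟩ := exists_PS hh (f := fun τ => (f τ)⁻¹) (fun τ => by simp only [hp τ]) (md_inv hd h0) hb
  have h1 : HasPS h (fun _ => 1) (p * s) := (hf.mul hs).congr (fun τ => mul_inv_cancel₀ (h0 τ)) rfl
  have h2 : p * s = 1 := by simpa using h1.unique hh (HasPS.const h 1)
  have : s = r := by
    calc s = (p * r) * s := by rw [hpr, one_mul]
      _ = (p * s) * r := by ring
      _ = r := by rw [h2, one_mul]
  exact this ▸ hs

/-- moderate growth -/
def Moder (h : ℝ) (f : ℍ → ℂ) : Prop := ∃ k : ℕ, IsBoundedAtImInfty (fun τ => qq h τ ^ k * f τ)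

lemma bdd_mul {f g : ℍ → ℂ} (hf : IsBoundedAtImInfty f) (hg : IsBoundedAtImInfty g) :
    IsBoundedAtImInfty (fun τ => f τ * g τ) := by
  have := Asymptotics.IsBigO.mul hf hg
  refine this.trans (Asymptotics.isBigO_of_le _ fun τ => ?_)
  simp

lemma bdd_pow {f : ℍ → ℂ} (hf : IsBoundedAtImInfty f) (n : ℕ) :
    IsBoundedAtImInfty (fun τ => f τ ^ n) := by
  have := Asymptotics.IsBigO.pow hf n
  refine this.trans (Asymptotics.isBigO_of_le _ fun τ => ?_)
  simp

lemma bdd_add {f g : ℍ → ℂ} (hf : IsBoundedAtImInfty f) (hg : IsBoundedAtImInfty g) :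
    IsBoundedAtImInfty (fun τ => f τ + g τ) := Asymptotics.IsBigO.add hf hg

lemma bdd_sub {f g : ℍ → ℂ} (hf : IsBoundedAtImInfty f) (hg : IsBoundedAtImInfty g) :
    IsBoundedAtImInfty (fun τ => f τ - g τ) := Asymptotics.IsBigO.sub hf hg

lemma bdd_const (c : ℂ) : IsBoundedAtImInfty (fun _ : ℍ => c) :=
  Asymptotics.isBigO_const_const _ one_ne_zero _

lemma Moder.inv {h : ℝ} (hh : 0 < h) {f} (hf : Moder h f) (hp : Per h f)
    (hd : MDifferentiable 𝓘(ℂ) 𝓘(ℂ) f) (h0 : ∀ τ, f τ ≠ 0) : Moder h (fun τ => (f τ)⁻¹) := by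
  obtain ⟨k, hk⟩ := hf
  obtain ⟨p, hP⟩ := exists_PS hh (f := fun τ => qq h τ ^ k * f τ)
    (fun τ => by simp only [hp τ, qq_per hh τ]) (md_mul (md_pow (qq_mdiff h) k) hd) hk
  have hp0 : p ≠ 0 := by
    rintro rfl
    have h1 : HasPS h (fun _ => 0) 0 := (HasPS.const h 0).congr (fun _ => rfl) (by simp)
    have h2 := (hP ⟨Complex.I, by simp⟩).unique (h1 ⟨Complex.I, by simp⟩)
    exact mul_ne_zero (pow_ne_zero _ (qq_ne _ _)) (h0 _) h2
  obtain ⟨n, u, rfl, hu⟩ := factor p hp0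
  have h1 := ((hP.shift n).lim hh).inv₀ hu
  have h2 : IsBoundedAtImInfty _ := h1.isBigO_one ℝ
  refine ⟨n, (bdd_mul (bdd_pow (qq_bdd hh) k) h2).congr_left fun τ => ?_⟩
  have := qq_ne h τ
  have := h0 τ
  field_simp

/-- exponent -/
def ee (a j : ℤ) : ℤ := 3 * (j * (j - 1)) + a * j

/-- index sets for coefficients -/
def FF (a : ℤ) (n : ℕ) : Finset ℤ := (Finset.Icc (-(n : ℤ)) n).filter (fun j => ee a j = n)

/-- rational power series of the theta functions -/
def AS (a : ℤ) : PowerSeries ℚ := PowerSeries.mk fun n => ∑ j ∈ FF a n, (-1 : ℚ) ^ j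

/-- normalized theta function -/
def AA (a : ℤ) (τ : ℍ) : ℂ := th (a * τ) (6 * τ)

/-- rational to complex coefficients -/
def toC : PowerSeries ℚ →+* PowerSeries ℂ := PowerSeries.map (algebraMap ℚ ℂ)

lemma toC_coeff (p : PowerSeries ℚ) (n : ℕ) : (toC p).coeff n = (p.coeff n : ℂ) := by
  simp [toC]

lemma ee_ge (a j : ℤ) (h1 : 1 ≤ a) (h3 : a ≤ 3) : |j| ≤ ee a j := by
  unfold ee
  rcases le_total 0 j with h | h
  · rw [abs_of_nonneg h]
    rcases h.eq_or_lt with rfl | h'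
    · simp
    · nlinarith
  · rw [abs_of_nonpos h]
    nlinarith [mul_nonneg (by linarith : 0 ≤ 3 - a) (neg_nonneg.2 h), sq_nonneg (j + 1), sq_nonneg j,
      Int.le_self_sq (-j)]

lemma AA_PS (a : ℤ) (h1 : 1 ≤ a) (h3 : a ≤ 3) : HasPS 1 (AA a) (toC (AS a)) := by
  intro τ
  have him : 0 < ((6 : ℂ) * τ).im := by
    have := τ.im_pos
    simpa [Complex.mul_im] using this
  have hs := (summable_th him (a * τ)).hasSum
  have hterm : ∀ j : ℤ, jacobiTheta₂_term j (a * τ + 1 / 2 - (6 * τ) / 2) (6 * τ) =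
      (-1) ^ j * qq 1 τ ^ (ee a j).toNat := by
    intro j
    rw [th_term]
    have e0 : 0 ≤ ee a j := (abs_nonneg j).trans (ee_ge a j h1 h3)
    have : qq 1 τ ^ (ee a j).toNat = qq 1 τ ^ (ee a j) := by
      conv_rhs => rw [← Int.toNat_of_nonneg e0]
      rw [zpow_natCast]
    rw [this, mul_assoc]
    congr 1
    unfold qq Function.Periodic.qParam ee
    rw [← Complex.exp_int_mul, ← Complex.exp_int_mul, ← Complex.exp_int_mul, ← Complex.exp_add]
    congr 1
    push_cast
    field_simp
    ring
  have hs' : HasSum (fun j : ℤ => (-1 : ℂ) ^ j * qq 1 τ ^ (ee a j).toNat) (AA a τ) := by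
    have e1 : AA a τ = ∑' j : ℤ, (-1) ^ j * (cexp (π * Complex.I * (6 * τ))) ^ (j * (j - 1)) *
        (cexp (2 * π * Complex.I * (a * τ))) ^ j := by
      unfold AA th jacobiTheta₂
      exact tsum_congr fun j => th_term _ _ _
    rw [e1]
    refine hs.congr_fun fun j => ?_
    rw [← hterm, th_term]
  have h5 := hs'.tsum_fiberwise (fun j => (ee a j).toNat)
  refine h5.congr_fun fun n => ?_
  have hset : (fun j => (ee a j).toNat) ⁻¹' {n} = (FF a n : Set ℤ) := by
    ext j
    have e0 := ee_ge a j h1 h3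
    have := abs_nonneg j
    simp only [Set.mem_preimage, Set.mem_singleton_iff, FF, Finset.coe_filter, Set.mem_ofPred_eq,
      Finset.mem_Icc]
    constructor
    · intro h
      have : ee a j = n := by omega
      exact ⟨abs_le.1 (by omega), this⟩
    · rintro ⟨-, h⟩; omega
  rw [tsum_congr_set_coe (fun j : ℤ => (-1 : ℂ) ^ j * qq 1 τ ^ (ee a j).toNat) hset]
  rw [Finset.tsum_subtype' (FF a n) (fun j : ℤ => (-1 : ℂ) ^ j * qq 1 τ ^ (ee a j).toNat)]
  rw [toC_coeff, AS, PowerSeries.coeff_mk]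
  push_cast
  rw [Finset.sum_mul]
  refine Finset.sum_congr rfl fun j hj => ?_
  have : ee a j = n := (Finset.mem_filter.1 hj).2
  rw [this]; simp

lemma AS10 : (AS 1).coeff 0 = 1 := by
  rw [AS, PowerSeries.coeff_mk, show FF 1 0 = {0} by decide]; simp
lemma AS11 : (AS 1).coeff 1 = -1 := by
  rw [AS, PowerSeries.coeff_mk, show FF 1 1 = {1} by decide]; simp
lemma AS20 : (AS 2).coeff 0 = 1 := by
  rw [AS, PowerSeries.coeff_mk, show FF 2 0 = {0} by decide]; simp
lemma AS21 : (AS 2).coeff 1 = 0 := by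
  rw [AS, PowerSeries.coeff_mk, show FF 2 1 = ∅ by decide]; simp
lemma AS30 : (AS 3).coeff 0 = 1 := by
  rw [AS, PowerSeries.coeff_mk, show FF 3 0 = {0} by decide]; simp
lemma AS31 : (AS 3).coeff 1 = 0 := by
  rw [AS, PowerSeries.coeff_mk, show FF 3 1 = ∅ by decide]; simp

lemma HasPS.per {h : ℝ} (hh : 0 < h) {f p} (hf : HasPS h f p) : Per h f := by
  intro τ
  have h1 := hf (h +ᵥ τ)
  rw [qq_per hh τ] at h1
  exact h1.unique (hf τ)

lemma AA_KK (a : ℤ) (τ : ℍ) : KK ((a / 6 : ℝ) : ℂ) ((0 : ℝ) : ℂ) (6 * τ) =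
    cexp (π * Complex.I * (((a / 6 : ℂ) ^ 2 - a / 6) * (6 * τ))) * AA a τ := by
  unfold KK AA
  push_cast
  congr 2
  · ring
  · ring

lemma KK6_mdiff (u v : ℝ) : MDifferentiable 𝓘(ℂ) 𝓘(ℂ) (fun τ : ℍ => KK u v (6 * τ)) := by
  refine mdiff_of (F := fun τ => KK u v (6 * τ)) fun τ hτ => ?_
  have h1 : 0 < ((6 : ℂ) * τ).im := by simpa [Complex.mul_im] using hτ
  exact (KK_diff u v h1).comp (f := fun τ : ℂ => 6 * τ) τ (by fun_prop)

lemma AA_eq (a : ℤ) (τ : ℍ) : AA a τ = 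
    cexp (-(π * Complex.I * (((a / 6 : ℂ) ^ 2 - a / 6) * (6 * τ)))) * KK ((a / 6 : ℝ) : ℂ) ((0 : ℝ) : ℂ) (6 * τ) := by
  rw [AA_KK, ← mul_assoc, ← Complex.exp_add]; simp

lemma AA_mdiff (a : ℤ) : MDifferentiable 𝓘(ℂ) 𝓘(ℂ) (AA a) := by
  have h := md_mul (mdiff_of (F := fun τ : ℂ => cexp (-(π * Complex.I * (((a / 6 : ℂ) ^ 2 - a / 6) * (6 * τ)))))
    (fun τ _ => by fun_prop)) (KK6_mdiff (a / 6) 0)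
  have e : AA a = _ := funext (AA_eq a)
  rw [e]
  exact h

lemma KK6_ne (a : ℤ) (h1 : 1 ≤ a) (h3 : a ≤ 3) (τ : ℍ) : KK ((a / 6 : ℝ) : ℂ) ((0 : ℝ) : ℂ) (6 * τ) ≠ 0 := by
  have := KK_ne (hsmul 6 τ) (a / 6) 0 (fun h => by
    refine not_int_of 0 ?_ ?_ h.1
    · have : (1 : ℝ) ≤ a := by exact_mod_cast h1
      simp; linarith
    · have : (a : ℝ) ≤ 3 := by exact_mod_cast h3
      simp; linarith)
  rw [coe_hsmul τ] at this
  exact this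

lemma AA_ne (a : ℤ) (h1 : 1 ≤ a) (h3 : a ≤ 3) (τ : ℍ) : AA a τ ≠ 0 := by
  rw [AA_eq]
  exact mul_ne_zero (Complex.exp_ne_zero _) (KK6_ne a h1 h3 τ)

lemma gC_AA (τ : ℍ) : qq 1 τ * gC τ = AA 3 τ ^ 3 * ((AA 1 τ)⁻¹) ^ 3 := by
  have h1 := AA_KK 1 τ
  have h3 := AA_KK 3 τ
  norm_num at h1 h3
  unfold gC
  rw [h1, h3]
  have hA := AA_ne 1 (by norm_num) (by norm_num) τ
  have e : qq 1 τ * cexp (-(π * Complex.I * (1 / 4 * (6 * τ)))) ^ 3 =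
      cexp (-(π * Complex.I * (5 / 36 * (6 * τ)))) ^ 3 := by
    unfold qq Function.Periodic.qParam
    rw [← Complex.exp_nat_mul, ← Complex.exp_nat_mul, ← Complex.exp_add]
    congr 1; push_cast; ring
  have hE := Complex.exp_ne_zero (-(π * Complex.I * (5 / 36 * (6 * τ))))
  rw [mul_div_mul_comm, mul_pow, div_pow, ← mul_assoc, ← mul_div_assoc, e, div_self (pow_ne_zero _ hE)]
  rw [one_mul, div_eq_mul_inv, mul_pow]

lemma fC_AA (τ : ℍ) : qq 1 τ * fC τ = AA 2 τ ^ 4 * ((AA 1 τ)⁻¹) ^ 4 := by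
  have h1 := AA_KK 1 τ
  have h3 := AA_KK 2 τ
  norm_num at h1 h3
  unfold fC
  rw [h1, h3]
  have hA := AA_ne 1 (by norm_num) (by norm_num) τ
  have e : qq 1 τ * cexp (-(π * Complex.I * (2 / 9 * (6 * τ)))) ^ 4 =
      cexp (-(π * Complex.I * (5 / 36 * (6 * τ)))) ^ 4 := by
    unfold qq Function.Periodic.qParam
    rw [← Complex.exp_nat_mul, ← Complex.exp_nat_mul, ← Complex.exp_add]
    congr 1; push_cast; ring
  have hE := Complex.exp_ne_zero (-(π * Complex.I * (5 / 36 * (6 * τ))))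
  rw [mul_div_mul_comm, mul_pow, div_pow, ← mul_assoc, ← mul_div_assoc, e, div_self (pow_ne_zero _ hE)]
  rw [one_mul, div_eq_mul_inv, mul_pow]

lemma coeff1_mul (p r : PowerSeries ℚ) : (p * r).coeff 1 = p.coeff 0 * r.coeff 1 + p.coeff 1 * r.coeff 0 := by
  rw [PowerSeries.coeff_mul]
  simp [Finset.Nat.antidiagonal_succ]

lemma coeff0_mul (p r : PowerSeries ℚ) : (p * r).coeff 0 = p.coeff 0 * r.coeff 0 := by
  simp

lemma coeff0_pow (p : PowerSeries ℚ) (hp : p.coeff 0 = 1) (n : ℕ) : (p ^ n).coeff 0 = 1 := by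
  rw [PowerSeries.coeff_zero_eq_constantCoeff] at *
  rw [map_pow, hp, one_pow]

lemma coeff1_pow (p : PowerSeries ℚ) (hp : p.coeff 0 = 1) (n : ℕ) : (p ^ n).coeff 1 = n * p.coeff 1 := by
  induction n with
  | zero => simp [PowerSeries.coeff_one]
  | succ n ih => rw [pow_succ, coeff1_mul, ih, coeff0_pow p hp, hp]; push_cast; ring

/-- inverse series -/
def AI : PowerSeries ℚ := (AS 1)⁻¹

lemma AS_AI : AS 1 * AI = 1 := by
  refine PowerSeries.mul_inv_cancel _ ?_
  rw [← PowerSeries.coeff_zero_eq_constantCoeff_apply, AS10]; norm_num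

lemma AI0 : AI.coeff 0 = 1 := by
  have := congrArg (PowerSeries.coeff 0) AS_AI
  rw [coeff0_mul, AS10] at this
  simpa using this

lemma AI1 : AI.coeff 1 = 1 := by
  have := congrArg (PowerSeries.coeff 1) AS_AI
  rw [coeff1_mul, AS10, AS11, AI0, PowerSeries.coeff_one] at this
  norm_num at this
  linarith

/-- series of `q g` -/
def GS : PowerSeries ℚ := AS 3 ^ 3 * AI ^ 3
/-- series of `q f` -/
def FS : PowerSeries ℚ := AS 2 ^ 4 * AI ^ 4

lemma GS0 : GS.coeff 0 = 1 := by
  rw [GS, coeff0_mul, coeff0_pow _ AS30, coeff0_pow _ AI0, one_mul]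
lemma FS0 : FS.coeff 0 = 1 := by
  rw [FS, coeff0_mul, coeff0_pow _ AS20, coeff0_pow _ AI0, one_mul]
lemma GS1 : GS.coeff 1 = 3 := by
  rw [GS, coeff1_mul, coeff0_pow _ AS30, coeff0_pow _ AI0, coeff1_pow _ AS30, coeff1_pow _ AI0, AS31, AI1]
  norm_num
lemma FS1 : FS.coeff 1 = 4 := by
  rw [FS, coeff1_mul, coeff0_pow _ AS20, coeff0_pow _ AI0, coeff1_pow _ AS20, coeff1_pow _ AI0, AS21, AI1]
  norm_num

lemma AI_PS : HasPS 1 (fun τ => (AA 1 τ)⁻¹) (toC AI) :=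
  (AA_PS 1 le_rfl (by norm_num)).inv one_pos (by rw [← map_mul, AS_AI, map_one])
    ((AA_PS 1 le_rfl (by norm_num)).per one_pos) (AA_mdiff 1) (AA_ne 1 le_rfl (by norm_num))

lemma g_PS : HasPS 1 (fun τ => qq 1 τ * gC τ) (toC GS) :=
  (((AA_PS 3 (by norm_num) le_rfl).pow 3).mul (AI_PS.pow 3)).congr (fun τ => (gC_AA τ).symm)
    (by simp [GS])

lemma f_PS : HasPS 1 (fun τ => qq 1 τ * fC τ) (toC FS) :=
  (((AA_PS 2 (by norm_num) (by norm_num)).pow 4).mul (AI_PS.pow 4)).congr (fun τ => (fC_AA τ).symm)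
    (by simp [FS])

lemma dvdX (p : PowerSeries ℚ) (h : p.coeff 0 = 0) : p = PowerSeries.X * PowerSeries.mk (fun n => p.coeff (n + 1)) := by
  conv_lhs => rw [PowerSeries.eq_X_mul_shift_add_const p]
  rw [← PowerSeries.coeff_zero_eq_constantCoeff_apply, h]; simp

lemma dvdXC (p : PowerSeries ℂ) (h : p.coeff 0 = 0) : p = PowerSeries.X * PowerSeries.mk (fun n => p.coeff (n + 1)) := by
  conv_lhs => rw [PowerSeries.eq_X_mul_shift_add_const p]
  rw [← PowerSeries.coeff_zero_eq_constantCoeff_apply, h]; simp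

lemma toC_X : toC PowerSeries.X = PowerSeries.X := by simp [toC]

lemma gC_mdiff : MDifferentiable 𝓘(ℂ) 𝓘(ℂ) (fun τ : ℍ => gC τ) := by
  have h1 := KK6_mdiff (3 / 6) 0
  have h2 := md_inv (KK6_mdiff (1 / 6) 0) (fun τ => by
    simpa using! KK6_ne 1 le_rfl (by norm_num) τ)
  convert! md_pow (md_mul h1 h2) 3 using 2 with τ
  unfold gC
  norm_num [div_eq_mul_inv]

lemma fC_mdiff : MDifferentiable 𝓘(ℂ) 𝓘(ℂ) (fun τ : ℍ => fC τ) := by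
  have h1 := KK6_mdiff (2 / 6) 0
  have h2 := md_inv (KK6_mdiff (1 / 6) 0) (fun τ => by
    simpa using! KK6_ne 1 le_rfl (by norm_num) τ)
  convert! md_pow (md_mul h1 h2) 4 using 2 with τ
  unfold fC
  norm_num [div_eq_mul_inv]

lemma KK1_mdiff (u v : ℝ) : MDifferentiable 𝓘(ℂ) 𝓘(ℂ) (fun τ : ℍ => KK u v τ) :=
  mdiff_of (F := fun τ => KK u v τ) fun τ hτ => KK_diff u v hτ

lemma wC_mdiff : MDifferentiable 𝓘(ℂ) 𝓘(ℂ) (fun τ : ℍ => wC τ) := by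
  have h1 := KK1_mdiff 0 (-1 / 2)
  have h2 := md_inv (KK1_mdiff 0 (-1 / 6)) (fun τ => 
    KK_ne τ 0 (-1 / 6) (fun h => not_int_of (-1) (by norm_num) (by norm_num) h.2))
  convert! md_pow (md_mul h1 h2) 3 using 2 with τ
  unfold wC
  norm_num [div_eq_mul_inv]

lemma gC_ne (τ : ℍ) : gC τ ≠ 0 := by
  have h1 := KK6_ne 3 (by norm_num) le_rfl τ
  have h2 := KK6_ne 1 le_rfl (by norm_num) τ
  norm_num at h1 h2
  unfold gC
  exact pow_ne_zero _ (div_ne_zero h1 h2)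

lemma fC_ne (τ : ℍ) : fC τ ≠ 0 := by
  have h1 := KK6_ne 2 (by norm_num) (by norm_num) τ
  have h2 := KK6_ne 1 le_rfl (by norm_num) τ
  norm_num at h1 h2
  unfold fC
  exact pow_ne_zero _ (div_ne_zero h1 h2)

lemma bdd_of_tendsto {f : ℍ → ℂ} {c : ℂ} (h : Filter.Tendsto f atImInfty (nhds c)) : IsBoundedAtImInfty f :=
  h.isBigO_one ℝ

lemma f_eq (τ : ℍ) : fC τ = gC τ + 1 := by
  have h0 : (GS - FS).coeff 0 = 0 := by rw [map_sub, GS0, FS0, sub_self]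
  have h1 : HasPS 1 (fun τ : ℍ => gC τ - fC τ) (toC (PowerSeries.mk (fun n => (GS - FS).coeff (n + 1)))) := by
    have h2 : HasPS 1 (fun τ : ℍ => qq 1 τ * gC τ - qq 1 τ * fC τ) (PowerSeries.X * toC (PowerSeries.mk (fun n => (GS - FS).coeff (n + 1)))) := by
      refine (g_PS.sub f_PS).congr (fun _ => rfl) ?_
      rw [← map_sub, ← toC_X, ← map_mul, ← dvdX _ h0]
    refine h2.shift1.congr (fun τ => ?_) rfl
    rw [← mul_sub, inv_mul_cancel_left₀ (qq_ne _ _)]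
  have hl := h1.lim one_pos
  rw [toC_coeff, PowerSeries.coeff_mk, map_sub, GS1, FS1] at hl
  obtain ⟨c, hc⟩ := const_of_bdd (F := fun τ : ℍ => gC τ - fC τ) (md_sub gC_mdiff fC_mdiff)
    (fun γ hγ τ => by simp only [gC_inv hγ, fC_inv hγ]) (h1.bdd one_pos)
    (bdd_sub (bdd_of_tendsto g_S) f_S) (bdd_sub g_c2 (bdd_of_tendsto f_c2))
    (bdd_sub (bdd_of_tendsto g_c3) f_c3)
  have := atImInfty_neBot'
  have h3 : (fun τ : ℍ => gC τ - fC τ) = fun _ => c := funext hc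
  rw [h3] at hl
  have h4 := tendsto_nhds_unique hl tendsto_const_nhds
  have h5 := hc τ
  rw [← h4] at h5
  push_cast at h5
  linear_combination -h5

lemma T_mem : ModularGroup.T ∈ Gamma1 6 := by
  rw [Gamma1_mem]; simp [ModularGroup.T]

lemma per1 {F : ℍ → ℂ} (hinv : ∀ γ ∈ Gamma1 6, ∀ τ : ℍ, F (γ • τ) = F τ) : Per 1 F := fun τ => by
  rw [← modular_T_smul, hinv _ T_mem]

lemma aff6_tendsto : Filter.Tendsto (aff 1 0 6 (by norm_num) (by norm_num)) atImInfty atImInfty := by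
  have := aff_tendsto 1 0 6 (by norm_num) (by norm_num)
  unfold LL at this
  rw [Filter.tendsto_comap_iff] at this
  unfold atImInfty
  rw [Filter.tendsto_comap_iff]
  exact this

lemma g8_ne (τ : ℍ) : gC τ - 8 ≠ 0 := by
  have := atImInfty_neBot'
  have hw0 : Filter.Tendsto (fun τ : ℍ => wC τ - 8) atImInfty (nhds 0) := by
    simpa using w_inf.sub_const 8
  obtain ⟨p, hp⟩ := exists_PS one_pos (f := fun τ : ℍ => wC τ - 8)
    (per1 (F := fun τ : ℍ => wC τ - 8) (fun γ hγ τ => by simp only [wC_inv hγ])) (md_sub wC_mdiff (md_const 8))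
    (bdd_of_tendsto hw0)
  have hp0 := tendsto_nhds_unique (hp.lim one_pos) hw0
  rw [dvdXC p hp0] at hp
  set u := PowerSeries.mk (fun n => p.coeff (n + 1)) with hu
  have h8 : HasPS 1 (fun τ : ℍ => qq 1 τ * (gC τ - 8)) (toC GS - PowerSeries.X * PowerSeries.C 8) :=
    (g_PS.sub ((HasPS.q 1).mul (HasPS.const 1 8))).congr (fun τ => by ring) rfl
  have hP : HasPS 1 (fun τ : ℍ => (gC τ - 8) * (wC τ - 8)) ((toC GS - PowerSeries.X * PowerSeries.C 8) * u) := by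
    refine (h8.mul hp.shift1).congr (fun τ => ?_) rfl
    have := qq_ne 1 τ
    field_simp
  obtain ⟨c, hc⟩ := const_of_bdd (F := fun τ : ℍ => (gC τ - 8) * (wC τ - 8))
    (md_mul (md_sub gC_mdiff (md_const 8)) (md_sub wC_mdiff (md_const 8)))
    (fun γ hγ τ => by simp only [gC_inv hγ, wC_inv hγ]) (hP.bdd one_pos)
    (by
      refine ((hP.bdd one_pos).comp_tendsto aff6_tendsto).congr_left fun τ => ?_
      rw [gS_eq, wS_eq]
      exact mul_comm _ _)
    (bdd_mul (bdd_sub g_c2 (bdd_const 8)) (bdd_sub w_c2 (bdd_const 8)))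
    (bdd_mul (bdd_sub (bdd_of_tendsto g_c3) (bdd_const 8)) (bdd_sub w_c3 (bdd_const 8)))
  have hc0 : c ≠ 0 := by
    rintro rfl
    have h1 := hP.eq_zero one_pos hc
    have h2 : toC GS - PowerSeries.X * PowerSeries.C (8 : ℂ) ≠ 0 := by
      intro h
      have := congrArg (PowerSeries.coeff 0) h
      rw [map_sub, toC_coeff, GS0] at this
      simp at this
    have h3 : u = 0 := (mul_eq_zero.1 h1).resolve_left h2
    have h4 : ∀ τ : ℍ, wC τ - 8 = 0 := by
      intro τ
      have := hp τ
      rw [h3] at this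
      simpa using! this.unique (by simp)
    have h5 : ∀ τ : ℍ, gC (aff 1 0 6 (by norm_num) (by norm_num) τ : ℍ) = 8 := by
      intro τ
      rw [← wS_eq]
      exact sub_eq_zero.1 (h4 _)
    have h6 := (g_PS.lim one_pos).comp aff6_tendsto
    have h7 := ((qq_tendsto one_pos).comp aff6_tendsto).mul_const 8
    have h8 := tendsto_nhds_unique h6 (h7.congr fun τ => by
      simp only [Function.comp]; rw [h5])
    rw [toC_coeff, GS0] at h8
    simp at h8
  intro h
  apply hc0
  rw [← hc τ]
  rw [h, zero_mul]

lemma qpow_eq (d : ℕ) (n : ℤ) (τ : ℍ) : qpow d n τ = qq d τ ^ n := by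
  unfold qpow qq Function.Periodic.qParam
  rw [← Complex.exp_int_mul]
  congr 1
  push_cast
  ring

lemma T6_conj (γ : SL(2, ℤ)) : γ * ModularGroup.T ^ (6 : ℤ) * γ⁻¹ ∈ Gamma1 6 := by
  have h : ModularGroup.T ^ (6 : ℤ) ∈ CongruenceSubgroup.Gamma 6 := by
    rw [Gamma_mem, ModularGroup.coe_T_zpow]
    refine ⟨by simp, ?_, by simp, by simp⟩
    simp
    decide
  have h2 := (Gamma_normal 6).conj_mem _ h γ
  rw [Gamma_mem] at h2
  rw [Gamma1_mem]
  exact ⟨h2.1, h2.2.2.2, h2.2.2.1⟩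

lemma per6 {F : ℍ → ℂ} (hinv : ∀ γ ∈ Gamma1 6, ∀ τ : ℍ, F (γ • τ) = F τ) (γ : SL(2, ℤ)) :
    Per 6 (fun τ => F (γ • τ)) := fun τ => by
  have h1 : (6 : ℝ) +ᵥ τ = (ModularGroup.T ^ (6 : ℤ)) • τ := by
    rw [modular_T_zpow_smul]; norm_num
  have h2 : γ • (ModularGroup.T ^ (6 : ℤ)) • τ = (γ * ModularGroup.T ^ (6 : ℤ) * γ⁻¹) • γ • τ := by
    simp only [smul_smul]
    congr 1
    group
  simp only
  rw [h1, h2, hinv _ (T6_conj γ)]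

lemma wh_of {F : ℍ → ℂ} (hd : MDifferentiable 𝓘(ℂ) 𝓘(ℂ) F)
    (hinv : ∀ γ ∈ Gamma1 6, ∀ τ : ℍ, F (γ • τ) = F τ) (k : ℕ) (r : PowerSeries ℚ)
    (hr : HasPS 1 (fun τ => qq 1 τ ^ k * F τ) (toC r))
    (hm : ∀ γ : SL(2, ℤ), Moder 6 (fun τ => F (γ • τ))) : IsWeaklyHolo1 6 F := by
  refine ⟨hd, hinv, ⟨-k, fun n => r.coeff n, fun τ => ?_⟩, fun γ => ?_⟩
  · have h := (hr τ).mul_left ((qq 1 τ ^ k)⁻¹)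
    rw [inv_mul_cancel_left₀ (pow_ne_zero _ (qq_ne _ _))] at h
    refine h.congr_fun fun n => ?_
    rw [qpow_eq, zpow_add₀ (qq_ne _ _), toC_coeff]
    simp
    ring
  · obtain ⟨k, hk⟩ := hm γ
    obtain ⟨p, hp⟩ := exists_PS (h := 6) (by norm_num) (f := fun τ => qq 6 τ ^ k * F (γ • τ))
      (fun τ => by simp only [per6 hinv γ τ, qq_per (by norm_num : (0:ℝ) < 6) τ])
      (md_mul (md_pow (qq_mdiff 6) k) (md_SL hd γ)) hk
    refine ⟨-k, fun n => p.coeff n, fun τ => ?_⟩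
    have h := (hp τ).mul_left ((qq 6 τ ^ k)⁻¹)
    rw [inv_mul_cancel_left₀ (pow_ne_zero _ (qq_ne _ _))] at h
    refine h.congr_fun fun n => ?_
    rw [qpow_eq, zpow_add₀ (qq_ne _ _)]
    simp
    ring

lemma Moder.T {F : ℍ → ℂ} (h : Moder 6 F) (j : ℤ) : Moder 6 (fun τ => F ((ModularGroup.T ^ j) • τ)) := by
  obtain ⟨k, hk⟩ := h
  have h2 := hk.comp_tendsto (T_tendsto j)
  have h3 : ∀ τ : ℍ, ‖qq 6 ((ModularGroup.T ^ j) • τ)‖ = ‖qq 6 τ‖ := fun τ => by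
    unfold qq
    rw [Function.Periodic.norm_qParam, Function.Periodic.norm_qParam, modular_T_zpow_smul]
    simp
  refine ⟨k, Asymptotics.IsBigO.trans (Asymptotics.isBigO_of_le _ fun τ => ?_) h2⟩
  simp only [Function.comp, norm_mul, norm_pow, h3, le_refl]

lemma moder_all {F : ℍ → ℂ} (hinv : ∀ γ ∈ Gamma1 6, ∀ τ : ℍ, F (γ • τ) = F τ)
    (h1 : Moder 6 F) (hS : IsBoundedAtImInfty (fun τ => F (ModularGroup.S • τ)))
    (h2 : IsBoundedAtImInfty (fun τ => F (c2 • τ))) (h3 : IsBoundedAtImInfty (fun τ => F (c3 • τ)))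
    (γ : SL(2, ℤ)) : Moder 6 (fun τ => F (γ • τ)) := by
  obtain ⟨ρ, hρ, j, δ, hδ, h⟩ := cusp_rep γ
  have hb : Moder 6 (fun τ => F (ρ • τ)) := by
    rcases hρ with rfl | rfl | rfl | rfl
    · simpa using h1
    · exact ⟨0, by simpa using! hS⟩
    · exact ⟨0, by simpa using! h2⟩
    · exact ⟨0, by simpa using! h3⟩
  have := hb.T j
  obtain ⟨k, hk⟩ := this
  refine ⟨k, hk.congr_left fun τ => ?_⟩
  simp only
  rw [h, hinv δ hδ]

lemma qq1 (τ : ℍ) : qq 1 τ = qq 6 τ ^ 6 := by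
  unfold qq Function.Periodic.qParam
  rw [← Complex.exp_nat_mul]
  congr 1
  push_cast
  ring

lemma g_sub_moder (a : ℂ) (γ : SL(2, ℤ)) : Moder 6 (fun τ => gC (γ • τ : ℍ) - a) := by
  refine moder_all (F := fun τ : ℍ => gC τ - a) (fun γ hγ τ => by simp only [gC_inv hγ]) ?_
    (bdd_sub (bdd_of_tendsto g_S) (bdd_const a)) (bdd_sub g_c2 (bdd_const a))
    (bdd_sub (bdd_of_tendsto g_c3) (bdd_const a)) γ
  refine ⟨6, ?_⟩
  have := bdd_sub (g_PS.bdd one_pos) (bdd_mul (qq_bdd one_pos) (bdd_const a))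
  refine this.congr_left fun τ => ?_
  rw [← qq1]; ring

lemma g_sub_PS (a : ℚ) : HasPS 1 (fun τ : ℍ => qq 1 τ * (gC τ - a)) (toC (GS - PowerSeries.X * PowerSeries.C a)) :=
  (g_PS.sub ((HasPS.q 1).mul (HasPS.const 1 (a : ℂ)))).congr (fun τ => by ring) (by
    rw [map_sub, map_mul, toC_X]; simp [toC])

lemma wh_inv (a : ℚ) (h0 : ∀ τ : ℍ, gC τ - a ≠ 0) : IsWeaklyHolo1 6 (fun τ : ℍ => (gC τ - a)⁻¹) := by
  have hr0 : (GS - PowerSeries.X * PowerSeries.C a) * (GS - PowerSeries.X * PowerSeries.C a)⁻¹ = 1 := by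
    refine PowerSeries.mul_inv_cancel _ ?_
    rw [← PowerSeries.coeff_zero_eq_constantCoeff_apply, map_sub, GS0]; simp
  have hinv : ∀ γ ∈ Gamma1 6, ∀ τ : ℍ, gC (γ • τ : ℍ) - a = gC τ - a := fun γ hγ τ => by
    rw [gC_inv hγ]
  have hd := md_sub gC_mdiff (md_const (a : ℂ))
  have h1 := (g_sub_PS a).inv one_pos (r := toC ((GS - PowerSeries.X * PowerSeries.C a)⁻¹))
    (by rw [← map_mul, hr0, map_one]) ((g_sub_PS a).per one_pos)
    (md_mul (qq_mdiff 1) hd) (fun τ => mul_ne_zero (qq_ne _ _) (h0 τ))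
  have h2 := (HasPS.q 1).mul h1
  refine wh_of (md_inv hd h0) (fun γ hγ τ => by simp only [hinv γ hγ]) 0
    (PowerSeries.X * (GS - PowerSeries.X * PowerSeries.C a)⁻¹) (h2.congr (fun τ => ?_) ?_) (fun γ => ?_)
  · have := qq_ne 1 τ
    have := h0 τ
    field_simp
  · rw [map_mul, toC_X]
  · exact (g_sub_moder a γ).inv (by norm_num) (per6 (F := fun τ : ℍ => gC τ - a) hinv γ)
      (md_SL (f := fun τ : ℍ => gC τ - a) hd γ) (fun τ => h0 _)

lemma wh_g : IsWeaklyHolo1 6 (fun τ : ℍ => gC τ) :=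
  wh_of gC_mdiff (fun γ hγ τ => gC_inv hγ τ) 1 GS (g_PS.congr (fun τ => by ring) rfl)
    (fun γ => by simpa using g_sub_moder 0 γ)

lemma PS_of_exp {d : ℕ} {n₀ : ℤ} {c : ℕ → ℂ} {f : ℍ → ℂ}
    (hs : ∀ τ : ℍ, HasSum (fun n : ℕ => c n * qpow d (n₀ + n) τ) (f τ)) :
    ∃ k m : ℕ, HasPS d (fun τ => qq d τ ^ k * f τ) (PowerSeries.X ^ m * PowerSeries.mk c) := by
  have h1 : HasPS d (fun τ => (qq d τ ^ n₀)⁻¹ * f τ) (PowerSeries.mk c) := fun τ => by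
    refine ((hs τ).mul_left ((qq d τ ^ n₀)⁻¹)).congr_fun fun n => ?_
    rw [qpow_eq, zpow_add₀ (qq_ne _ _), PowerSeries.coeff_mk, zpow_natCast]
    have := zpow_ne_zero n₀ (qq_ne d τ)
    field_simp
  refine ⟨(-n₀).toNat, n₀.toNat, (((HasPS.q d).pow n₀.toNat).mul h1).congr (fun τ => ?_) rfl⟩
  rw [← mul_assoc]
  congr 1
  rw [← zpow_natCast, ← zpow_natCast, ← _root_.zpow_neg, ← zpow_add₀ (qq_ne _ _)]
  congr 1
  omega

lemma bdd_up {h : ℍ → ℂ} {k N : ℕ} (hkN : k ≤ N) (hb : IsBoundedAtImInfty (fun τ => qq 6 τ ^ k * h τ)) :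
    IsBoundedAtImInfty (fun τ => qq 6 τ ^ N * h τ) := by
  refine (bdd_mul (bdd_pow (qq_bdd (by norm_num : (0 : ℝ) < 6)) (N - k)) hb).congr_left fun τ => ?_
  rw [← mul_assoc, ← pow_add, Nat.sub_add_cancel hkN]

lemma wh_moder {h : ℍ → ℂ} (hh : IsWeaklyHolo1 6 h) (γ : SL(2, ℤ)) :
    ∃ k : ℕ, IsBoundedAtImInfty (fun τ => qq 6 τ ^ k * h (γ • τ)) := by
  obtain ⟨n₀, c, hc⟩ := hh.2.2.2 γ
  obtain ⟨k, m, hk⟩ := PS_of_exp hc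
  exact ⟨k, by simpa using hk.bdd (by norm_num)⟩

/-- a periodic function tending to zero is divisible by the local parameter -/
lemma zero_dvq {F : ℍ → ℂ} (hd : MDifferentiable 𝓘(ℂ) 𝓘(ℂ) F)
    (hinv : ∀ γ ∈ Gamma1 6, ∀ τ : ℍ, F (γ • τ) = F τ) (γ : SL(2, ℤ))
    (hz : Filter.Tendsto (fun τ => F (γ • τ)) atImInfty (nhds 0)) :
    IsBoundedAtImInfty (fun τ => (qq 6 τ)⁻¹ * F (γ • τ)) := by
  have h6 : (0 : ℝ) < 6 := by norm_num
  obtain ⟨p, hp⟩ := exists_PS h6 (per6 hinv γ) (md_SL hd γ) (bdd_of_tendsto hz)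
  have := atImInfty_neBot'
  have h0 : p.coeff 0 = 0 := tendsto_nhds_unique (hp.lim h6) hz
  rw [dvdXC p h0] at hp
  exact hp.shift1.bdd h6

lemma combine {h u v : ℍ → ℂ} {N : ℕ} (hb : IsBoundedAtImInfty (fun τ => qq 6 τ ^ N * h τ))
    (hu : IsBoundedAtImInfty (fun τ => (qq 6 τ)⁻¹ * u τ)) (hv : IsBoundedAtImInfty v) :
    IsBoundedAtImInfty (fun τ => h τ * (u τ * v τ) ^ N) := by
  refine (bdd_mul hb (bdd_pow (bdd_mul hu hv) N)).congr_left fun τ => ?_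
  have := pow_ne_zero N (qq_ne 6 τ)
  rw [mul_pow, mul_pow, mul_pow, inv_pow]
  field_simp

lemma poly_of {M : ℕ} : ∀ {F : ℍ → ℂ} {r : PowerSeries ℚ} (_ : MDifferentiable 𝓘(ℂ) 𝓘(ℂ) F)
    (_ : ∀ γ ∈ Gamma1 6, ∀ τ : ℍ, F (γ • τ) = F τ)
    (_ : IsBoundedAtImInfty (fun τ => F (ModularGroup.S • τ)))
    (_ : IsBoundedAtImInfty (fun τ => F (c2 • τ))) (_ : IsBoundedAtImInfty (fun τ => F (c3 • τ)))
    (_ : HasPS 1 (fun τ => qq 1 τ ^ M * F τ) (toC r)),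
    ∃ P : Polynomial ℚ, ∀ τ : ℍ, F τ = Polynomial.aeval (gC τ) P := by
  induction M with
  | zero =>
    intro F r hd hinv hS h2 h3 hr
    have hr' : HasPS 1 F (toC r) := hr.congr (fun τ => by simp) rfl
    obtain ⟨c, hc⟩ := const_of_bdd hd hinv (hr'.bdd one_pos) hS h2 h3
    have h := hr'.unique one_pos ((HasPS.const 1 c).congr (fun τ => (hc τ).symm) rfl)
    have h' := congrArg (PowerSeries.coeff 0) h
    rw [toC_coeff, PowerSeries.coeff_zero_C] at h'
    refine ⟨Polynomial.C (r.coeff 0), fun τ => ?_⟩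
    rw [hc, ← h', Polynomial.aeval_C]
    rfl
  | succ M ih =>
    intro F r hd hinv hS h2 h3 hr
    have hgb : ∀ {γ : SL(2, ℤ)}, IsBoundedAtImInfty (fun τ : ℍ => gC (γ • τ : ℍ)) →
        IsBoundedAtImInfty (fun τ : ℍ => (r.coeff 0 : ℂ) * gC (γ • τ : ℍ) ^ (M + 1)) :=
      fun hg => bdd_mul (bdd_const _) (bdd_pow hg _)
    have hs0 : (r - PowerSeries.C (r.coeff 0) * GS ^ (M + 1)).coeff 0 = 0 := by
      rw [map_sub, coeff0_mul, coeff0_pow _ GS0]; simp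
    have hF : HasPS 1 (fun τ => qq 1 τ ^ (M + 1) * (F τ - (r.coeff 0 : ℂ) * gC τ ^ (M + 1)))
        (toC (r - PowerSeries.C (r.coeff 0) * GS ^ (M + 1))) := by
      refine (hr.sub ((HasPS.const 1 (r.coeff 0 : ℂ)).mul (g_PS.pow (M + 1)))).congr (fun τ => by ring) ?_
      rw [map_sub, map_mul, map_pow]
      simp [toC]
    rw [dvdX _ hs0, map_mul, toC_X] at hF
    obtain ⟨P, hP⟩ := ih (F := fun τ => F τ - (r.coeff 0 : ℂ) * gC τ ^ (M + 1))
      (md_sub hd (md_mul (md_const _) (md_pow gC_mdiff _)))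
      (fun γ hγ τ => by simp only [hinv γ hγ, gC_inv hγ])
      (bdd_sub hS (hgb (bdd_of_tendsto g_S))) (bdd_sub h2 (hgb g_c2))
      (bdd_sub h3 (hgb (bdd_of_tendsto g_c3)))
      (hF.shift1.congr (fun τ => by
        have := qq_ne 1 τ
        rw [pow_succ]
        field_simp) rfl)
    refine ⟨P + Polynomial.C (r.coeff 0) * Polynomial.X ^ (M + 1), fun τ => ?_⟩
    have := hP τ
    simp only [map_add, map_mul, map_pow, Polynomial.aeval_C, Polynomial.aeval_X]
    rw [← this]
    simp

lemma wh_poly {h : ℍ → ℂ} (hh : IsWeaklyHolo1 6 h) : ∃ N : ℕ, ∃ P : Polynomial ℚ, ∀ τ : ℍ,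
    h τ * (gC τ * ((gC τ - 8) * fC τ)) ^ N = Polynomial.aeval (gC τ) P := by
  obtain ⟨kS, hS⟩ := wh_moder hh ModularGroup.S
  obtain ⟨k2, h2⟩ := wh_moder hh c2
  obtain ⟨k3, h3⟩ := wh_moder hh c3
  obtain ⟨n₀, c, hc⟩ := hh.2.2.1
  obtain ⟨k, m, hk⟩ := PS_of_exp hc
  set N := max kS (max k2 k3) with hN
  have bS := bdd_up (show kS ≤ N by omega) hS
  have b2 := bdd_up (show k2 ≤ N by omega) h2
  have b3 := bdd_up (show k3 ≤ N by omega) h3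
  have i8 : ∀ γ ∈ Gamma1 6, ∀ τ : ℍ, gC (γ • τ : ℍ) - 8 = gC τ - 8 := fun γ hγ τ => by rw [gC_inv hγ]
  have m8 := md_sub gC_mdiff (md_const 8)
  have zS := zero_dvq (F := fun τ : ℍ => gC τ - 8) m8 i8 ModularGroup.S
    (by simpa using! g_S.sub_const 8)
  have z2 := zero_dvq (F := fun τ : ℍ => fC τ) fC_mdiff (fun γ hγ τ => fC_inv hγ τ) c2 f_c2
  have z3 := zero_dvq (F := fun τ : ℍ => gC τ) gC_mdiff (fun γ hγ τ => gC_inv hγ τ) c3 g_c3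
  refine ⟨N, ?_⟩
  refine poly_of (M := k + 3 * N) (F := fun τ => h τ * (gC τ * ((gC τ - 8) * fC τ)) ^ N)
    (r := PowerSeries.X ^ m * PowerSeries.mk c * ((GS - PowerSeries.X * PowerSeries.C 0) *
      ((GS - PowerSeries.X * PowerSeries.C 8) * (GS - PowerSeries.X * PowerSeries.C (-1)))) ^ N)
    (md_mul hh.1 (md_pow (md_mul gC_mdiff (md_mul m8 fC_mdiff)) N))
    (fun γ hγ τ => by simp only [hh.2.1 γ hγ, gC_inv hγ, fC_inv hγ]) ?_ ?_ ?_ ?_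
  · refine (combine bS zS (bdd_mul (bdd_of_tendsto g_S) f_S)).congr_left fun τ => ?_
    ring
  · refine (combine b2 z2 (bdd_mul g_c2 (bdd_sub g_c2 (bdd_const 8)))).congr_left fun τ => ?_
    ring
  · exact combine b3 z3 (bdd_mul (bdd_sub (bdd_of_tendsto g_c3) (bdd_const 8)) f_c3)
  · have hk' : HasPS 1 (fun τ => qq 1 τ ^ k * h τ) (toC (PowerSeries.X ^ m * PowerSeries.mk c)) := by
      have hk2 : HasPS 1 (fun τ => qq 1 τ ^ k * h τ)
        (PowerSeries.X ^ m * PowerSeries.mk (fun n => (c n : ℂ))) := by simpa using hk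
      refine hk2.congr (fun _ => rfl) ?_
      rw [map_mul, map_pow, toC_X]
      congr 1
    refine (hk'.mul (((g_sub_PS 0).mul ((g_sub_PS 8).mul (g_sub_PS (-1)))).pow N)).congr (fun τ => ?_) ?_
    · rw [f_eq]
      push_cast
      rw [pow_add, pow_mul]
      rw [show qq 1 τ * (gC τ - 0) * (qq 1 τ * (gC τ - 8) * (qq 1 τ * (gC τ - -1)))
        = qq 1 τ ^ 3 * (gC τ * ((gC τ - 8) * (gC τ + 1))) by ring, mul_pow]
      ring
    · simp only [map_mul, map_pow]

lemma final {h : ℍ → ℂ} (hh : IsWeaklyHolo1 6 h) : ∃ P : MvPolynomial (Fin 4) ℚ, ∀ τ : ℍ,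
    h τ = MvPolynomial.aeval ![gC τ, (gC τ)⁻¹, (gC τ - 8)⁻¹, (gC τ + 1)⁻¹] P := by
  obtain ⟨N, P, hP⟩ := wh_poly hh
  refine ⟨Polynomial.aeval (MvPolynomial.X 0) P * (MvPolynomial.X 1 ^ N * (MvPolynomial.X 2 ^ N *
    MvPolynomial.X 3 ^ N)), fun τ => ?_⟩
  have h1 := gC_ne τ
  have h2 := g8_ne τ
  have h3 := fC_ne τ
  rw [map_mul, ← Polynomial.aeval_algHom_apply]
  simp only [map_mul, map_pow, MvPolynomial.aeval_X]
  have e : Polynomial.aeval (gC τ) P = h τ * (gC τ * ((gC τ - 8) * (gC τ + 1))) ^ N := by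
    rw [← hP τ, f_eq]
  rw [f_eq] at h3
  simp only [Matrix.cons_val]
  rw [e, ← mul_pow, ← mul_pow, mul_assoc, ← mul_pow]
  rw [show gC τ * ((gC τ - 8) * (gC τ + 1)) * ((gC τ)⁻¹ * ((gC τ - 8)⁻¹ * (gC τ + 1)⁻¹)) = 1 by
    field_simp, one_pow, mul_one]

/-- `O_{1,6}(ℚ) = ℚ[g_{1,6}, g_{1,6}⁻¹, (g_{1,6} - 8)⁻¹, (g_{1,6} + 1)⁻¹]`. -/
theorem statement16 :
    IsWeaklyHolo1 6 gOne6 ∧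
    IsWeaklyHolo1 6 (fun τ => (gOne6 τ)⁻¹) ∧
    IsWeaklyHolo1 6 (fun τ => (gOne6 τ - 8)⁻¹) ∧
    IsWeaklyHolo1 6 (fun τ => (gOne6 τ + 1)⁻¹) ∧
    (∀ h : ℍ → ℂ, IsWeaklyHolo1 6 h →
      ∃ P : MvPolynomial (Fin 4) ℚ, ∀ τ : ℍ,
        h τ = MvPolynomial.aeval
          ![gOne6 τ, (gOne6 τ)⁻¹, (gOne6 τ - 8)⁻¹, (gOne6 τ + 1)⁻¹] P) := by
  have e : gOne6 = fun τ : ℍ => gC τ := funext gOne6_eq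
  rw [e]
  refine ⟨wh_g, ?_, ?_, ?_, fun h hh => final hh⟩
  · have := wh_inv 0 (fun τ => by simpa using gC_ne τ)
    simpa using this
  · have := wh_inv 8 (fun τ => by simpa using g8_ne τ)
    simpa using this
  · have := wh_inv (-1) (fun τ => by simpa [f_eq] using fC_ne τ)
    simpa using this
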